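/- Let K be a number field and S a finite set of places of K containing all the archimedean ones. Let A, B, C ∈ ℙ¹(K) be three distinct points. Then the set of points P ∈ ℙ¹(K) satisfying δ_𝔭(A,P) = 0, δ_𝔭(B,P) = 0 and δ_𝔭(C,P) = 0 for all primes 𝔭 ∉ S is finite, of cardinality at most 3·7^{4|S|}. -/

import Mathlib

open NumberField IsDedekindDomain MvPolynomial
open scoped Classical nonZeroDivisors

set_option synthInstance.maxHeartbeats 1000000
set_option maxHeartbeats 1000000

noncomputable section

/-- The projective line over `K`. -/
abbrev P1 (K : Type*) [Field K] := Projectivization K (Fin 2 → K)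

variable {K : Type*} [Field K] [NumberField K]

/-- The additive `v`-adic valuation (order) of `x ∈ K`, with junk value `0` at `x = 0`,
normalized so that it is surjective onto `ℤ`. -/
def ordAt (v : HeightOneSpectrum (𝓞 K)) (x : K) : ℤ :=
  if hx : x = 0 then 0
  else - Multiplicative.toAdd (WithZero.unzero ((v.valuation K).ne_zero_iff.mpr hx))

/-- `min (v(x), v(y))` for a pair of coordinates, not both zero. -/
def minOrd (v : HeightOneSpectrum (𝓞 K)) (x y : K) : ℤ :=
  if x = 0 then ordAt v y else if y = 0 then ordAt v x else min (ordAt v x) (ordAt v y)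

/-- The `v`-adic logarithmic distance between two points of `ℙ¹(K)`:
`δ_v(P,Q) = v(x₁y₂ - x₂y₁) - min(v x₁, v y₁) - min(v x₂, v y₂)`, with value `⊤` when `P = Q`
(it is independent of the choice of homogeneous coordinates, so we compute it on the chosen
representatives). -/
def logDist (v : HeightOneSpectrum (𝓞 K)) (P Q : P1 K) : WithTop ℤ :=
  if P = Q then ⊤
  else ((ordAt v (P.rep 0 * Q.rep 1 - P.rep 1 * Q.rep 0)
        - minOrd v (P.rep 0) (P.rep 1) - minOrd v (Q.rep 0) (Q.rep 1) : ℤ) : WithTop ℤ)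

/-- An endomorphism of `ℙ¹` of degree `d` defined over `K`, given by a pair of homogeneous
forms of degree `d` with no common zero over the algebraic closure, together with the induced
self-map of `ℙ¹(K)`. -/
structure P1Map (K : Type*) [Field K] (d : ℕ) where
  toFun : P1 K → P1 K
  F : MvPolynomial (Fin 2) K
  G : MvPolynomial (Fin 2) K
  homF : F.IsHomogeneous d
  homG : G.IsHomogeneous d
  coprime : ∀ x y : AlgebraicClosure K,
    aeval ![x, y] F = 0 → aeval ![x, y] G = 0 → x = 0 ∧ y = 0
  compat : ∀ (x y : K) (hxy : ![x, y] ≠ 0)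
    (h : ![eval ![x, y] F, eval ![x, y] G] ≠ 0),
    toFun (Projectivization.mk K ![x, y] hxy) =
      Projectivization.mk K ![eval ![x, y] F, eval ![x, y] G] h

variable {d : ℕ}

/-- `φ` has good reduction at the finite place `v`: some representing pair of forms has
coefficients in the valuation ring at `v`, not all in the maximal ideal, and the reductions
of the two forms modulo `v` have no common zero in `ℙ¹` of the algebraic closure of the
residue field. -/
def GoodReductionAt (φ : P1Map K d) (v : HeightOneSpectrum (𝓞 K)) : Prop :=
  ∃ c : K, c ≠ 0 ∧
    ∃ F₀ G₀ : MvPolynomial (Fin 2) (v.valuation (K := K)).valuationSubring,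
      MvPolynomial.map ((v.valuation (K := K)).valuationSubring.subtype) F₀ = C c * φ.F ∧
      MvPolynomial.map ((v.valuation (K := K)).valuationSubring.subtype) G₀ = C c * φ.G ∧
      ((∃ m, F₀.coeff m ∉ IsLocalRing.maximalIdeal (v.valuation (K := K)).valuationSubring) ∨
        (∃ m, G₀.coeff m ∉ IsLocalRing.maximalIdeal (v.valuation (K := K)).valuationSubring)) ∧
      ∀ x y : AlgebraicClosure
          (IsLocalRing.ResidueField (v.valuation (K := K)).valuationSubring),
        eval ![x, y] (MvPolynomial.map
          ((algebraMap (IsLocalRing.ResidueField (v.valuation (K := K)).valuationSubring)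
              (AlgebraicClosure _)).comp
            (IsLocalRing.residue _)) F₀) = 0 →
        eval ![x, y] (MvPolynomial.map
          ((algebraMap (IsLocalRing.ResidueField (v.valuation (K := K)).valuationSubring)
              (AlgebraicClosure _)).comp
            (IsLocalRing.residue _)) G₀) = 0 →
        x = 0 ∧ y = 0

/-- `φ` has good reduction outside `S`, where `S` consists of all archimedean places together
with the finite places in `T`. -/
def GoodReductionOutside (φ : P1Map K d) (T : Finset (HeightOneSpectrum (𝓞 K))) : Prop :=
  ∀ v ∉ T, GoodReductionAt φ v

/-- `P` is a periodic point of `φ`. -/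
def IsPeriodicPoint (φ : P1Map K d) (P : P1 K) : Prop :=
  ∃ n, 0 < n ∧ φ.toFun^[n] P = P

/-- `P` is a preperiodic point of `φ`. -/
def IsPreperiodicPoint (φ : P1Map K d) (P : P1 K) : Prop :=
  ∃ m, IsPeriodicPoint φ (φ.toFun^[m] P)

/-- `P` is a tail point of `φ`: preperiodic but not periodic. -/
def IsTailPoint (φ : P1Map K d) (P : P1 K) : Prop :=
  IsPreperiodicPoint φ P ∧ ¬ IsPeriodicPoint φ P

/-- The set `Tail(φ,K,P)` of `K`-rational tail points of `P`: non-periodic points having `P`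
in their forward orbit. -/
def TailOf (φ : P1Map K d) (P : P1 K) : Set (P1 K) :=
  {Q | ¬ IsPeriodicPoint φ Q ∧ ∃ n, φ.toFun^[n] Q = P}

/-- `P = [a:b]` is a critical point of `φ = [F:G]`: the algebraic condition
`φ([x:y]) = φ([a:b])`, i.e. the form `G(a,b)·F(X,Y) - F(a,b)·G(X,Y)`, vanishes to order
at least `2` at `[a:b]`. -/
def IsCriticalPt (φ : P1Map K d) (P : P1 K) : Prop :=
  ∃ (a b : K) (hab : ![a, b] ≠ 0), P = Projectivization.mk K ![a, b] hab ∧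
    (C b * X 0 - C a * X 1) ^ 2 ∣
      (C (eval ![a, b] φ.G) * φ.F - C (eval ![a, b] φ.F) * φ.G)

/-- `P` belongs to a critical cycle of `φ`: it lies in the orbit of a critical periodic
point. -/
def InCriticalCycle (φ : P1Map K d) (P : P1 K) : Prop :=
  ∃ Q, IsCriticalPt φ Q ∧ IsPeriodicPoint φ Q ∧ ∃ n, φ.toFun^[n] Q = P

/-- The cardinality `|S|` of the set of places `S` consisting of all archimedean places
together with the finite places in `T`. -/
def sCard (K : Type*) [Field K] [NumberField K] (T : Finset (HeightOneSpectrum (𝓞 K))) : ℕ :=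
  T.card + Fintype.card (InfinitePlace K)

/-- `B(s) = 2^{16 s}`. -/
def Bconst (s : ℕ) : ℕ := 2 ^ (16 * s)

/-- `C(n,s) = e^{(6n)^{3n} (n s + 1 - n)}`. -/
def Cconst (n s : ℕ) : ℝ := Real.exp ((6 * n : ℝ) ^ (3 * n) * (n * s + 1 - n))

/-- `CV(d,s) = (3B(s)+13)d + 27B(s) + C(5,s) + 6C(3,s) + 32`. -/
def CVconst (d s : ℕ) : ℝ :=
  (3 * (Bconst s : ℝ) + 13) * d + 27 * (Bconst s : ℝ) + Cconst 5 s + 6 * Cconst 3 s + 32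

/-- `L₁(d,s) = (d-1)(1 + d(1 + B(s)))`. -/
def L1const (d s : ℕ) : ℕ := (d - 1) * (1 + d * (1 + Bconst s))

/-- `L₂(d,s) = max{(2(C(3,s)+2)+1)d + 1, (d-1)(1 + B(s)(B(s) + C(3,s) + 3))}`. -/
def L2const (d s : ℕ) : ℝ :=
  max ((2 * (Cconst 3 s + 2) + 1) * d + 1)
    (((d : ℝ) - 1) * (1 + (Bconst s : ℝ) * ((Bconst s : ℝ) + Cconst 3 s + 3)))

/-- `L₃(d,s) = ((1 + 3B(s))B(s) + 1)(d-1)`. -/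
def L3const (d s : ℕ) : ℕ := ((1 + 3 * Bconst s) * Bconst s + 1) * (d - 1)

/-- `L₄(d,s) = (C(3,s) + 3)(d-1)`. -/
def L4const (d s : ℕ) : ℝ := (Cconst 3 s + 3) * ((d : ℝ) - 1)

end

/-!
If three points are sent to `0`, `1` and `∞`, a point `P` at prescribed distances from them outside
`S` becomes a solution `u` of `u + (1 - u) = 1` in which `u` and `1 - u` have prescribed absolute
values outside `S`, and such solutions are counted by Evertse's method. The Padé approximants of
`(1 - z) ^ n` produce from a solution `x` many points on the line `x₀ + x₁ + x₂ = 0` that are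
very close to the same coordinate lines as `x`. By the product formula, a second solution close to
these lines at the places of `S` is either of height comparable to that of `x` or much larger than
all of these points allow. After the distances of the solutions to the coordinate lines have been
rounded to finitely many weights, these gaps leave room for at most fifteen large solutions for each
weight. The small solutions are separated by their positions at the archimedean places.
-/

namespace UnitEquation

open NumberField.HeightOneSpectrum (adicAbv adicAbv_def isNonarchimedean_adicAbv)

section PadeForms

open Finset.HasAntidiagonal (antidiagonal mem_antidiagonal)

variable {R : Type*} [CommRing R]

/-- The binary form of degree `r` proportional to `∫₀¹ tᵖ (1 - t)^q (x (1 - t) + y t)ʳ dt`, a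
hypergeometric polynomial scaled so that its coefficients are integers. -/
def padeForm (p q r : ℕ) (x y : R) : R :=
  ∑ ij ∈ antidiagonal r,
    (((q + ij.1).choose q * (p + ij.2).choose p : ℕ) : R) * (x ^ ij.1 * y ^ ij.2)

theorem map_padeForm {R' : Type*} [CommRing R'] (f : R →+* R') (p q r : ℕ) (x y : R) :
    f (padeForm p q r x y) = padeForm p q r (f x) (f y) := by
  simp [padeForm]

theorem natDegree_padeForm_le (p q r : ℕ) {x y : Polynomial R} (hx : x.natDegree ≤ 1)
    (hy : y.natDegree ≤ 1) : (padeForm p q r x y).natDegree ≤ r := by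
  refine Polynomial.natDegree_sum_le_of_forall_le _ _ fun ij hij => ?_
  calc _ ≤ 0 + (ij.1 * 1 + ij.2 * 1) :=
        Polynomial.natDegree_mul_le_of_le (Polynomial.natDegree_natCast _).le
          (Polynomial.natDegree_mul_le_of_le (Polynomial.natDegree_pow_le_of_le ij.1 hx)
            (Polynomial.natDegree_pow_le_of_le ij.2 hy))
    _ = r := by rw [zero_add, mul_one, mul_one, mem_antidiagonal.1 hij]

theorem padeForm_one_one_pos (p q r : ℕ) : 0 < padeForm p q r (1 : ℤ) 1 := by
  refine Finset.sum_pos (fun ij _ => ?_) ⟨(0, r), by simp⟩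
  have := Nat.choose_pos (Nat.le_add_right q ij.1)
  have := Nat.choose_pos (Nat.le_add_right p ij.2)
  simp only [one_pow, mul_one]
  positivity

theorem padeForm_zero_one (p q r : ℕ) : padeForm p q r (0 : R) 1 = (p + r).choose p := by
  rw [padeForm, Finset.sum_eq_single (0, r)]
  · simp
  · rintro ⟨i, j⟩ hij hne
    have : i ≠ 0 := by rintro rfl; simp_all
    simp [this]
  · simp

theorem integral_pow_mul_one_sub_pow (a b : ℕ) :
    ∫ t in (0 : ℝ)..1, t ^ a * (1 - t) ^ b =
      (a.factorial * b.factorial : ℝ) / (a + b + 1).factorial := by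
  have h := Complex.Gamma_mul_Gamma_eq_betaIntegral (s := a + 1) (t := b + 1)
    (by simp only [Complex.add_re, Complex.natCast_re, Complex.one_re]; positivity)
    (by simp only [Complex.add_re, Complex.natCast_re, Complex.one_re]; positivity)
  rw [show (a + 1 + (b + 1) : ℂ) = (a + b + 1 : ℕ) + 1 by push_cast; ring] at h
  simp only [Complex.Gamma_nat_eq_factorial, Complex.betaIntegral, add_sub_cancel_right,
    Complex.cpow_natCast] at h
  rw [eq_div_iff (by positivity), mul_comm, ← Complex.ofReal_inj]
  push_cast [← intervalIntegral.integral_ofReal]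
  exact h.symm

theorem padeForm_eq_integral (p q r : ℕ) (x y : ℝ) :
    padeForm p q r x y = (p + q + r + 1).factorial / (p.factorial * q.factorial * r.factorial) *
      ∫ t in (0 : ℝ)..1, t ^ p * (1 - t) ^ q * (x * (1 - t) + y * t) ^ r := by
  have expand (t : ℝ) : t ^ p * (1 - t) ^ q * (x * (1 - t) + y * t) ^ r =
      ∑ ij ∈ antidiagonal r, x ^ ij.1 * y ^ ij.2 * r.choose ij.1 *
        (t ^ (p + ij.2) * (1 - t) ^ (q + ij.1)) := by
    rw [(Commute.all _ _).add_pow', Finset.mul_sum]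
    refine Finset.sum_congr rfl fun ij _ => ?_
    rw [nsmul_eq_mul, mul_pow, mul_pow, pow_add, pow_add]
    ring
  simp_rw [expand]
  rw [intervalIntegral.integral_finsetSum
    fun _ _ => Continuous.intervalIntegrable (by fun_prop) _ _, Finset.mul_sum, padeForm]
  refine Finset.sum_congr rfl fun ij hij => ?_
  obtain rfl := mem_antidiagonal.1 hij
  rw [intervalIntegral.integral_const_mul, integral_pow_mul_one_sub_pow,
    show p + ij.2 + (q + ij.1) + 1 = p + q + (ij.1 + ij.2) + 1 by ring, Nat.cast_mul]
  simp only [Nat.cast_add_choose]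
  field_simp

/-- The three terms of the Padé identity
`∫₀ᵘ w + ∫ᵤ¹ w = ∫₀¹ w` for `w(t) = tᵃ (1 - t)ᵇ (t - u)ᶜ`: the first is divisible by a high power
of `u`, the second by a high power of `1 - u`. -/
def padeTriple (a b c : ℕ) (u : R) : Fin 3 → R :=
  ![(-1) ^ c * u ^ (a + c + 1) * padeForm a c b 1 (1 - u),
    (1 - u) ^ (b + c + 1) * padeForm c b a u 1,
    -padeForm a b c (-u) (1 - u)]

theorem map_padeTriple {R' : Type*} [CommRing R'] (f : R →+* R') (a b c : ℕ) (u : R) (i : Fin 3) :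
    f (padeTriple a b c u i) = padeTriple a b c (f u) i := by
  fin_cases i <;> simp [padeTriple, map_padeForm]

theorem sum_padeTriple_real (a b c : ℕ) (u : ℝ) : ∑ i, padeTriple a b c u i = 0 := by
  set w : ℝ → ℝ := fun t => t ^ a * (1 - t) ^ b * (t - u) ^ c with hw
  have hwc : Continuous w := by fun_prop
  have whole : ∫ t in (0 : ℝ)..1, t ^ a * (1 - t) ^ b * (-u * (1 - t) + (1 - u) * t) ^ c =
      ∫ t in (0 : ℝ)..1, w t := by
    congr 1 with t
    simp only [hw]
    ring
  have left : (-1) ^ c * u ^ (a + c + 1) *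
      (∫ t in (0 : ℝ)..1, t ^ a * (1 - t) ^ c * (1 * (1 - t) + (1 - u) * t) ^ b) =
      ∫ t in (0 : ℝ)..u, w t := by
    have := intervalIntegral.mul_integral_comp_mul_left (f := w) (a := 0) (b := 1) (c := u)
    rw [mul_zero, mul_one] at this
    rw [← this, ← intervalIntegral.integral_const_mul, ← intervalIntegral.integral_const_mul]
    congr 1 with t
    simp only [hw]
    rw [show u * t - u = -1 * u * (1 - t) by ring, mul_pow, mul_pow, mul_pow]
    ring
  have right : (1 - u) ^ (b + c + 1) *
      (∫ t in (0 : ℝ)..1, t ^ c * (1 - t) ^ b * (u * (1 - t) + 1 * t) ^ a) =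
      ∫ t in u..1, w t := by
    have := intervalIntegral.mul_integral_comp_mul_add (f := w) (a := 0) (b := 1)
      (c := 1 - u) (d := u)
    rw [mul_zero, mul_one, zero_add, sub_add_cancel] at this
    rw [← this, ← intervalIntegral.integral_const_mul, ← intervalIntegral.integral_const_mul]
    congr 1 with t
    simp only [hw]
    rw [show 1 - ((1 - u) * t + u) = (1 - u) * (1 - t) by ring,
      show (1 - u) * t + u - u = (1 - u) * t by ring, mul_pow, mul_pow]
    ring
  have split := intervalIntegral.integral_add_adjacent_intervals (μ := MeasureTheory.volume)
    (hwc.intervalIntegrable 0 u) (hwc.intervalIntegrable u 1)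
  rw [← left, ← right, ← whole] at split
  simp only [padeTriple, Fin.sum_univ_three, Matrix.cons_val, padeForm_eq_integral]
  rw [show a + c + b + 1 = a + b + c + 1 by ring, show c + b + a + 1 = a + b + c + 1 by ring,
    ← split]
  ring

theorem sum_padeTriple (a b c : ℕ) (u : R) : ∑ i, padeTriple a b c u i = 0 := by
  have universal : ∑ i, padeTriple a b c (Polynomial.X : Polynomial ℤ) i = 0 := by
    refine Polynomial.map_injective (Int.castRingHom ℝ) Int.cast_injective
      (Polynomial.funext fun x => ?_)
    rw [Polynomial.eval_map, ← Polynomial.coe_eval₂RingHom, map_sum]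
    simpa [map_padeTriple] using sum_padeTriple_real a b c x
  simpa [map_padeTriple] using
    congrArg (Polynomial.eval₂RingHom (Int.castRingHom R) u) universal

/-- The determinant `x₀ y₁ - x₁ y₀`. For triples with vanishing sum all the `2 × 2` minors agree
with it up to sign. -/
def wedge (x y : Fin 3 → R) : R := x 0 * y 1 - x 1 * y 0

theorem wedge_eq_minor {x y : Fin 3 → R} (hx : ∑ i, x i = 0) (hy : ∑ i, y i = 0)
    {i j : Fin 3} (hij : i ≠ j) :
    wedge x y = x i * y j - x j * y i ∨ wedge x y = -(x i * y j - x j * y i) := by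
  rw [Fin.sum_univ_three] at hx hy
  have hx2 : x 2 = -x 0 - x 1 := by linear_combination hx
  have hy2 : y 2 = -y 0 - y 1 := by linear_combination hy
  unfold wedge
  fin_cases i <;> fin_cases j <;> simp_all <;> grind

theorem wedge_eq_minor_one_two {x y : Fin 3 → R} (hx : ∑ i, x i = 0) (hy : ∑ i, y i = 0) :
    wedge x y = x 1 * y 2 - x 2 * y 1 := by
  rw [Fin.sum_univ_three] at hx hy
  unfold wedge
  linear_combination y 1 * hx - x 1 * hy

/-- The nontrivial factor of the Wronskian of two consecutive Padé triples. -/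
def padeWronskian (N : ℕ) (u : R) : R :=
  padeForm N N N 1 (1 - u) * padeForm N N (N + 1) u 1 -
    u * padeForm N N N u 1 * padeForm (N + 1) N N 1 (1 - u)

theorem map_padeWronskian {R' : Type*} [CommRing R'] (f : R →+* R') (N : ℕ) (u : R) :
    f (padeWronskian N u) = padeWronskian N (f u) := by
  simp [padeWronskian, map_padeForm]

theorem wedge_padeTriple (N : ℕ) (u : R) :
    wedge (padeTriple N N N u) (padeTriple (N + 1) N N u) =
      (-1) ^ N * (u * (1 - u)) ^ (2 * N + 1) * padeWronskian N u := by
  simp only [wedge, padeTriple, padeWronskian, Matrix.cons_val, mul_pow]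
  ring

theorem natDegree_one_sub_X : (1 - Polynomial.X : Polynomial ℤ).natDegree = 1 := by
  rw [← Polynomial.natDegree_neg, neg_sub]
  exact Polynomial.natDegree_X_sub_C (1 : ℤ)

theorem natDegree_wedge_padeTriple_le (N : ℕ) :
    (wedge (padeTriple N N N (Polynomial.X : Polynomial ℤ))
      (padeTriple (N + 1) N N Polynomial.X)).natDegree ≤ 4 * N + 2 := by
  have h1X : (1 - Polynomial.X : Polynomial ℤ).natDegree ≤ 1 := natDegree_one_sub_X.le
  have hX : (Polynomial.X : Polynomial ℤ).natDegree ≤ 1 := by simp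
  have hnX : (-Polynomial.X : Polynomial ℤ).natDegree ≤ 1 := by simp
  have h1 : (1 : Polynomial ℤ).natDegree ≤ 1 := by simp
  have hpow := Polynomial.natDegree_pow_le_of_le (N + N + 1) h1X
  rw [wedge_eq_minor_one_two (sum_padeTriple ..) (sum_padeTriple ..)]
  simp only [padeTriple, Matrix.cons_val]
  refine (Polynomial.natDegree_sub_le _ _).trans (max_le ?_ ?_)
  · rw [mul_neg, Polynomial.natDegree_neg]
    have := Polynomial.natDegree_mul_le_of_le (Polynomial.natDegree_mul_le_of_le hpow
      (natDegree_padeForm_le N N N hX h1)) (natDegree_padeForm_le (N + 1) N N hnX h1X)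
    omega
  · rw [neg_mul, Polynomial.natDegree_neg]
    have := Polynomial.natDegree_mul_le_of_le (natDegree_padeForm_le N N N hnX h1X)
      (Polynomial.natDegree_mul_le_of_le hpow (natDegree_padeForm_le N N (N + 1) hX h1))
    omega

theorem padeWronskian_zero_ne_zero (N : ℕ) : padeWronskian N (0 : ℤ) ≠ 0 := by
  have h1 := padeForm_one_one_pos N N N
  have h2 : 0 < (N + (N + 1)).choose N := Nat.choose_pos (Nat.le_add_right _ _)
  simp only [padeWronskian, sub_zero, zero_mul, padeForm_zero_one]
  positivity

theorem padeWronskian_X_eq_C (N : ℕ) :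
    padeWronskian N (Polynomial.X : Polynomial ℤ) = Polynomial.C (padeWronskian N 0) := by
  have hX : (Polynomial.X : Polynomial ℤ) ≠ 0 := Polynomial.X_ne_zero
  have h1X : (1 - Polynomial.X : Polynomial ℤ) ≠ 0 :=
    Polynomial.ne_zero_of_natDegree_gt (n := 0) (by simp [natDegree_one_sub_X])
  have heval : (padeWronskian N (Polynomial.X : Polynomial ℤ)).eval 0 = padeWronskian N 0 := by
    simpa using map_padeWronskian (Polynomial.evalRingHom (0 : ℤ)) N Polynomial.X
  have hne : padeWronskian N (Polynomial.X : Polynomial ℤ) ≠ 0 := fun h =>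
    padeWronskian_zero_ne_zero N (by simpa [h] using heval.symm)
  have hdeg := natDegree_wedge_padeTriple_le N
  rw [wedge_padeTriple, Polynomial.natDegree_mul (by simp [hX, h1X]) hne,
    Polynomial.natDegree_mul (by simp) (by simp [hX, h1X]), Polynomial.natDegree_pow,
    Polynomial.natDegree_pow, Polynomial.natDegree_mul hX h1X, natDegree_one_sub_X,
    Polynomial.natDegree_X] at hdeg
  rw [← heval, ← Polynomial.coeff_zero_eq_eval_zero]
  exact Polynomial.eq_C_of_natDegree_eq_zero (by omega)

theorem padeWronskian_eq_intCast (N : ℕ) (u : R) :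
    padeWronskian N u = ((padeWronskian N 0 : ℤ) : R) := by
  simpa [map_padeWronskian] using
    congrArg (Polynomial.eval₂RingHom (Int.castRingHom R) u) (padeWronskian_X_eq_C N)

theorem wedge_padeTriple_ne_zero [IsDomain R] [CharZero R] (N : ℕ) {u : R} (hu : u ≠ 0)
    (hu1 : 1 - u ≠ 0) : wedge (padeTriple N N N u) (padeTriple (N + 1) N N u) ≠ 0 := by
  rw [wedge_padeTriple, padeWronskian_eq_intCast]
  have := padeWronskian_zero_ne_zero N
  simp_all

theorem wedge_ne_zero_or_of_wedge_ne_zero [IsDomain R] {U V y : Fin 3 → R} (hUV : wedge U V ≠ 0)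
    (hy : y 0 ≠ 0) : wedge y U ≠ 0 ∨ wedge y V ≠ 0 := by
  by_contra! h
  refine mul_ne_zero hy hUV ?_
  simp only [wedge] at h ⊢
  linear_combination U 0 * h.2 - V 0 * h.1

end PadeForms

section AbsoluteValue

variable {K : Type*} [Field K] (f : AbsoluteValue K ℝ)

/-- The constant `c ∈ {1, 2}` for which `f (x + y) ≤ c * max (f x) (f y)`. -/
noncomputable def ultrametricConst : ℝ := if IsNonarchimedean f then 1 else 2

theorem one_le_ultrametricConst : 1 ≤ ultrametricConst f := by
  unfold ultrametricConst; split_ifs <;> norm_num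

theorem ultrametricConst_le_two : ultrametricConst f ≤ 2 := by
  unfold ultrametricConst; split_ifs <;> norm_num

theorem ultrametricConst_eq_one (hf : IsNonarchimedean f) : ultrametricConst f = 1 := if_pos hf

theorem abv_natCast_le {n k : ℕ} (h : n ≤ 2 ^ k) : f n ≤ ultrametricConst f ^ k := by
  unfold ultrametricConst
  split_ifs with hf
  · rw [one_pow]
    exact IsNonarchimedean.apply_natCast_le_one hf
  · exact (f.apply_nat_le_self n).trans (by exact_mod_cast h)

theorem abv_sum_le {ι : Type*} {s : Finset ι} (hs : s.Nonempty) {k : ℕ} (hk : s.card ≤ 2 ^ k)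
    {g : ι → K} {B : ℝ} (hg : ∀ i ∈ s, f (g i) ≤ B) :
    f (∑ i ∈ s, g i) ≤ ultrametricConst f ^ k * B := by
  unfold ultrametricConst
  split_ifs with hf
  · rw [one_pow, one_mul]
    obtain ⟨i, hi, h⟩ := hf.finset_image_add_of_nonempty g hs
    exact h.trans (hg i hi)
  · obtain ⟨i, hi⟩ := hs
    have hB : 0 ≤ B := (f.nonneg _).trans (hg i hi)
    calc f (∑ i ∈ s, g i) ≤ ∑ i ∈ s, f (g i) := f.sum_le _ _
      _ ≤ s.card • B := Finset.sum_le_card_nsmul _ _ _ hg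
      _ ≤ 2 ^ k * B := by
        rw [nsmul_eq_mul]
        gcongr
        exact_mod_cast hk

theorem abv_sub_le (x y : K) : f (x - y) ≤ ultrametricConst f * max (f x) (f y) := by
  have h := abv_sum_le f (s := Finset.univ) (g := ![x, -y]) (B := max (f x) (f y)) (k := 1)
    Finset.univ_nonempty (by simp) (by simp [Fin.forall_fin_two])
  simpa [sub_eq_add_neg] using h

theorem abv_padeForm_le (p q r : ℕ) {x y : K} {m : ℝ} (hx : f x ≤ m) (hy : f y ≤ m) :
    f (padeForm p q r x y) ≤ ultrametricConst f ^ (p + q + 2 * r) * m ^ r := by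
  have hc := one_le_ultrametricConst f
  rw [show p + q + 2 * r = r + (p + q + r) by ring, pow_add, mul_assoc]
  refine abv_sum_le f ⟨(0, r), by simp⟩ (by simpa using Nat.lt_two_pow_self) fun ij hij => ?_
  rw [Finset.HasAntidiagonal.mem_antidiagonal] at hij
  have hchoose : (q + ij.1).choose q * (p + ij.2).choose p ≤ 2 ^ (p + q + r) := by
    rw [show p + q + r = (q + ij.1) + (p + ij.2) by omega, pow_add]
    exact Nat.mul_le_mul (Nat.choose_le_two_pow _ _) (Nat.choose_le_two_pow _ _)
  have hm : f x ^ ij.1 * f y ^ ij.2 ≤ m ^ r := by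
    rw [← hij, pow_add]
    gcongr
    exact pow_nonneg ((f.nonneg x).trans hx) _
  rw [map_mul, map_mul, map_pow, map_pow]
  exact mul_le_mul (abv_natCast_le f hchoose) hm (by positivity) (by positivity)

/-- The largest absolute value of an entry. -/
noncomputable def supAbv (x : Fin 3 → K) : ℝ := ⨆ i, f (x i)

theorem abv_le_supAbv (x : Fin 3 → K) (i : Fin 3) : f (x i) ≤ supAbv f x :=
  Finite.le_ciSup (fun i => f (x i)) i

/-- The solution `u + (1 - u) = 1` of the unit equation, as a triple with vanishing sum. -/
def unitTriple (u : K) : Fin 3 → K := ![u, 1 - u, -1]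

omit f in
theorem sum_unitTriple (u : K) : ∑ i, unitTriple u i = 0 := by
  simp [unitTriple, Fin.sum_univ_three]

omit f in
theorem unitTriple_ne_zero {u : K} (hu : u ≠ 0) (hu1 : 1 - u ≠ 0) (i : Fin 3) :
    unitTriple u i ≠ 0 := by
  fin_cases i <;> simp [unitTriple, hu, hu1]

omit f in
theorem wedge_unitTriple (u y : K) : wedge (unitTriple u) (unitTriple y) = u - y := by
  simp only [wedge, unitTriple, Matrix.cons_val]
  ring

theorem one_le_supAbv_unitTriple (u : K) : 1 ≤ supAbv f (unitTriple u) := by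
  simpa [unitTriple] using abv_le_supAbv f (unitTriple u) 2

omit f in
theorem pow_mul_le_pow_mul_pow {X m c F : ℝ} {k k' e p q r : ℕ} (hX : 0 ≤ X) (hXm : X ≤ m)
    (hm : 1 ≤ m) (hc : 1 ≤ c) (hF : F ≤ c ^ k * m ^ r) (hk : k ≤ k') (hpe : p ≤ e)
    (hr : e + r ≤ p + q) : X ^ e * F ≤ c ^ k' * X ^ p * m ^ q := by
  obtain ⟨n, rfl⟩ := Nat.exists_eq_add_of_le hpe
  calc X ^ (p + n) * F ≤ X ^ (p + n) * (c ^ k' * m ^ r) := by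
        gcongr
        exact hF.trans (by gcongr)
    _ ≤ X ^ p * m ^ n * (c ^ k' * m ^ r) := by
        rw [pow_add]
        gcongr
    _ = c ^ k' * X ^ p * m ^ (n + r) := by ring
    _ ≤ c ^ k' * X ^ p * m ^ q := by
        gcongr
        omega

theorem abv_padeTriple_le (N : ℕ) {a : ℕ} (ha : a = N ∨ a = N + 1) (u : K) (i : Fin 3) :
    f (padeTriple a N N u i) ≤ ultrametricConst f ^ (4 * N + 2) *
      f (unitTriple u i) ^ (2 * N + 1) * supAbv f (unitTriple u) ^ (N + 1) := by
  have hm := one_le_supAbv_unitTriple f u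
  have hc := one_le_ultrametricConst f
  have h0 : f u ≤ supAbv f (unitTriple u) := abv_le_supAbv f (unitTriple u) 0
  have h0' : f (-u) ≤ supAbv f (unitTriple u) := by rwa [f.map_neg]
  have h1 : f (1 - u) ≤ supAbv f (unitTriple u) := abv_le_supAbv f (unitTriple u) 1
  have h2 : f 1 ≤ supAbv f (unitTriple u) := by rwa [map_one]
  have hsign : f ((-1) ^ N) = 1 := by simp
  fin_cases i
  · simpa [padeTriple, unitTriple, hsign] using pow_mul_le_pow_mul_pow (e := a + N + 1)
      (f.nonneg _) h0 hm hc (abv_padeForm_le f a N N h2 h1) (k' := 4 * N + 2) (p := 2 * N + 1)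
      (q := N + 1) (by omega) (by omega) (by omega)
  · simpa [padeTriple, unitTriple] using pow_mul_le_pow_mul_pow (e := N + N + 1)
      (f.nonneg _) h1 hm hc (abv_padeForm_le f N N a h0 h2) (k' := 4 * N + 2) (p := 2 * N + 1)
      (q := N + 1) (by omega) (by omega) (by omega)
  · simpa [padeTriple, unitTriple] using pow_mul_le_pow_mul_pow (e := 2 * N + 1)
      zero_le_one hm hm hc (abv_padeForm_le f a N N h0' h1) (k' := 4 * N + 2) (p := 2 * N + 1)
      (q := N + 1) (by omega) (by omega) (by omega)

omit f in
theorem exists_padeApproximant [CharZero K] (N : ℕ) {u y : K} (hu : u ≠ 0) (hu1 : 1 - u ≠ 0)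
    (hy : y ≠ 0) : ∃ U : Fin 3 → K, ∑ i, U i = 0 ∧ wedge (unitTriple y) U ≠ 0 ∧
      ∀ (f : AbsoluteValue K ℝ) (i : Fin 3), f (U i) ≤ ultrametricConst f ^ (4 * N + 2) *
        f (unitTriple u i) ^ (2 * N + 1) * supAbv f (unitTriple u) ^ (N + 1) := by
  obtain h | h := wedge_ne_zero_or_of_wedge_ne_zero (y := unitTriple y)
    (wedge_padeTriple_ne_zero N hu hu1) (by simpa [unitTriple])
  · exact ⟨_, sum_padeTriple N N N u, h, fun f i => abv_padeTriple_le f N (.inl rfl) u i⟩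
  · exact ⟨_, sum_padeTriple (N + 1) N N u, h, fun f i => abv_padeTriple_le f N (.inr rfl) u i⟩

/-- The logarithmic distance of the projective point `x` to the coordinate line `x i = 0`. -/
noncomputable def proximity (x : Fin 3 → K) (i : Fin 3) : ℝ :=
  Real.log (supAbv f x) - Real.log (f (x i))

variable {f} {x y U : Fin 3 → K}

theorem supAbv_pos (hx : ∀ i, x i ≠ 0) : 0 < supAbv f x :=
  (f.pos (hx 0)).trans_le (abv_le_supAbv f x 0)

theorem abv_wedge_eq_minor (hx : ∑ i, x i = 0) (hy : ∑ i, y i = 0) {i j : Fin 3} (hij : i ≠ j) :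
    f (wedge x y) = f (x i * y j - x j * y i) := by
  obtain h | h := wedge_eq_minor hx hy hij
  · rw [h]
  · rw [h, f.map_neg]

theorem supAbv_eq_one (hx : ∀ i, f (x i) = 1) : supAbv f x = 1 := by
  simp [supAbv, hx]

theorem abv_wedge_le_one (hf : IsNonarchimedean f)
    (hx : ∀ i, f (x i) ≤ 1) (hy : ∀ i, f (y i) ≤ 1) : f (wedge x y) ≤ 1 := by
  refine (abv_sub_le f _ _).trans ?_
  rw [ultrametricConst_eq_one f hf, one_mul, map_mul, map_mul]
  exact max_le (mul_le_one₀ (hx _) (f.nonneg _) (hy _)) (mul_le_one₀ (hx _) (f.nonneg _) (hy _))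

theorem proximity_nonneg (hx : ∀ i, x i ≠ 0) (i : Fin 3) : 0 ≤ proximity f x i :=
  sub_nonneg.2 (Real.log_le_log (f.pos (hx i)) (abv_le_supAbv f x i))

theorem min_proximity_le {E : ℝ} (hE : 0 < E) {p q : ℕ} (hx : ∀ i, x i ≠ 0) (hy : ∀ i, y i ≠ 0)
    (hy0 : ∑ i, y i = 0) (hU0 : ∑ i, U i = 0) (hyU : wedge y U ≠ 0)
    (hU : ∀ i, f (U i) ≤ E * f (x i) ^ p * supAbv f x ^ q) (i : Fin 3) :
    min (p * proximity f x i) (proximity f y i) ≤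
      (p + q) * Real.log (supAbv f x) + Real.log (supAbv f y) - Real.log (f (wedge y U)) +
        (Real.log (ultrametricConst f) + Real.log E) := by
  have hc := one_le_ultrametricConst f
  have hSx := supAbv_pos (f := f) hx
  have hSy := supAbv_pos (f := f) hy
  have hxi := f.pos (hx i)
  have hyi := f.pos (hy i)
  obtain ⟨j, hij⟩ : ∃ j, i ≠ j := (exists_ne i).imp fun _ => Ne.symm
  have hUj : f (U j) ≤ E * supAbv f x ^ (p + q) := (hU j).trans <| by
    rw [pow_add, ← mul_assoc]
    gcongr
    exact abv_le_supAbv f x j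
  have hwedge : f (wedge y U) ≤ ultrametricConst f *
      max (f (y i) * (E * supAbv f x ^ (p + q)))
        (supAbv f y * (E * f (x i) ^ p * supAbv f x ^ q)) := by
    rw [abv_wedge_eq_minor hy0 hU0 hij]
    refine (abv_sub_le f _ _).trans ?_
    rw [map_mul, map_mul]
    gcongr
    exacts [abv_le_supAbv f y j, hU i]
  have hlog := Real.log_le_log (f.pos hyU) hwedge
  rw [Real.log_mul (by positivity) (by positivity)] at hlog
  obtain h | h := max_choice (f (y i) * (E * supAbv f x ^ (p + q)))
    (supAbv f y * (E * f (x i) ^ p * supAbv f x ^ q)) <;> rw [h] at hlog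
  · refine (min_le_right _ _).trans ?_
    rw [Real.log_mul (by positivity) (by positivity), Real.log_mul (by positivity) (by positivity),
      Real.log_pow, Nat.cast_add] at hlog
    unfold proximity
    linarith
  · refine (min_le_left _ _).trans ?_
    rw [Real.log_mul (by positivity) (by positivity), Real.log_mul (by positivity) (by positivity),
      Real.log_mul (by positivity) (by positivity), Real.log_pow, Real.log_pow] at hlog
    unfold proximity
    linarith

variable (f x) in
/-- The permutation sorting the entries of `x` by absolute value, the smallest one first. -/
noncomputable def sortPerm : Equiv.Perm (Fin 3) := Tuple.sort fun i => f (x i)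

theorem abv_sortPerm_mono : Monotone fun i => f (x (sortPerm f x i)) :=
  Tuple.monotone_sort fun i => f (x i)

theorem abv_sortPerm_two : f (x (sortPerm f x 2)) = supAbv f x := by
  refine le_antisymm (abv_le_supAbv f x _) (ciSup_le fun i => ?_)
  simpa using abv_sortPerm_mono (f := f) (x := x) (Fin.le_last ((sortPerm f x).symm i))

theorem sum_proximity_eq : ∑ i, proximity f x i =
    proximity f x (sortPerm f x 0) + proximity f x (sortPerm f x 1) := by
  rw [← Equiv.sum_comp (sortPerm f x), Fin.sum_univ_three]
  simp [proximity, abv_sortPerm_two]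

theorem proximity_sortPerm_one_le (hx : ∀ i, x i ≠ 0) (hx0 : ∑ i, x i = 0) :
    proximity f x (sortPerm f x 1) ≤ Real.log (ultrametricConst f) := by
  set σ := sortPerm f x
  have hσ : x (σ 0) + x (σ 1) + x (σ 2) = 0 := by
    rw [← hx0, ← Equiv.sum_comp σ, Fin.sum_univ_three]
  have hsup : supAbv f x ≤ ultrametricConst f * f (x (σ 1)) := by
    have h := abv_sub_le f (-x (σ 0)) (x (σ 1))
    rwa [show -x (σ 0) - x (σ 1) = x (σ 2) by linear_combination -hσ, f.map_neg,
      max_eq_right (abv_sortPerm_mono (f := f) (x := x) (Fin.zero_le 1)), abv_sortPerm_two] at h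
  have hc := one_le_ultrametricConst f
  have h := Real.log_le_log (supAbv_pos hx) hsup
  rw [Real.log_mul (by positivity) (f.pos (hx _)).ne'] at h
  exact sub_le_iff_le_add.2 h

theorem min_proximity_le_of_isNonarchimedean (hf : IsNonarchimedean f) (hx : ∀ i, x i ≠ 0)
    (hy : ∀ i, y i ≠ 0) (hx0 : ∑ i, x i = 0) (hy0 : ∑ i, y i = 0) (hxy : wedge x y ≠ 0)
    (i : Fin 3) :
    min (proximity f x i) (proximity f y i) ≤
      Real.log (supAbv f x) + Real.log (supAbv f y) - Real.log (f (wedge x y)) := by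
  have h := min_proximity_le (f := f) (p := 1) (q := 0) one_pos hy hx hx0 hy0 hxy (by simp) i
  rw [ultrametricConst_eq_one f hf, Real.log_one, Nat.cast_one, Nat.cast_zero, one_mul,
    min_comm] at h
  linarith

theorem sum_proximity_le_of_isNonarchimedean (hf : IsNonarchimedean f) {p q : ℕ} (hp : 1 ≤ p)
    (hx : ∀ i, x i ≠ 0) (hy : ∀ i, y i ≠ 0) (hxy : ∀ i, f (x i) = f (y i)) (hy0 : ∑ i, y i = 0)
    (hU0 : ∑ i, U i = 0) (hyU : wedge y U ≠ 0)
    (hU : ∀ i, f (U i) ≤ f (x i) ^ p * supAbv f x ^ q) :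
    ∑ i, proximity f y i ≤
      (p + q) * Real.log (supAbv f x) + Real.log (supAbv f y) - Real.log (f (wedge y U)) := by
  have hprox : proximity f x = proximity f y := by
    funext i
    simp only [proximity, supAbv, hxy]
  have hmid := proximity_sortPerm_one_le (f := f) hy hy0
  have hkey := min_proximity_le one_pos hx hy hy0 hU0 hyU (by simpa using hU) (sortPerm f y 0)
  have hnonneg := proximity_nonneg (f := f) hy (sortPerm f y 0)
  have hp' : (1 : ℝ) ≤ p := by exact_mod_cast hp
  rw [hprox, min_eq_right (le_mul_of_one_le_left hnonneg hp')] at hkey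
  rw [ultrametricConst_eq_one f hf, Real.log_one] at hmid hkey
  rw [sum_proximity_eq]
  linarith [Real.log_one]

end AbsoluteValue

section Archimedean

variable {K : Type*} [Field K] {φ : K →+* ℂ} {f : AbsoluteValue K ℝ} {x y : Fin 3 → K}

variable (φ f x) in
/-- The smallest entry of `x` divided by the largest one, inside `ℂ`. It describes the position of
the projective point `x` with respect to an archimedean place. -/
noncomputable def smallRatio : ℂ := φ (x (sortPerm f x 0)) / φ (x (sortPerm f x 2))

theorem norm_smallRatio (hφ : ∀ z, f z = ‖φ z‖) :
    ‖smallRatio φ f x‖ = f (x (sortPerm f x 0)) / supAbv f x := by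
  rw [smallRatio, norm_div, ← hφ, ← hφ, abv_sortPerm_two]

theorem log_norm_smallRatio (hφ : ∀ z, f z = ‖φ z‖) (hx : ∀ i, x i ≠ 0) :
    Real.log ‖smallRatio φ f x‖ = -proximity f x (sortPerm f x 0) := by
  rw [norm_smallRatio hφ, Real.log_div (f.pos (hx _)).ne' (supAbv_pos hx).ne', proximity, neg_sub]

/-- The middle entry is minus the sum of the two others, so the ratio `z` satisfies
`|z| ≤ |1 + z| ≤ 1`. -/
theorem smallRatio_mem (hφ : ∀ z, f z = ‖φ z‖) (hx : ∀ i, x i ≠ 0) (hx0 : ∑ i, x i = 0) :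
    -(1 / 2) ≤ (smallRatio φ f x).re ∧ (smallRatio φ f x).re ≤ 0 ∧
      (smallRatio φ f x).im ^ 2 ≤ 3 / 4 := by
  set σ := sortPerm f x with hσ
  set z := smallRatio φ f x with hz
  have hsum : x (σ 0) + x (σ 1) + x (σ 2) = 0 := by
    rw [← hx0, ← Equiv.sum_comp σ, Fin.sum_univ_three]
  have hne : φ (x (σ 2)) ≠ 0 := by simpa using hx (σ 2)
  have hsup := supAbv_pos (f := f) hx
  have hmid : ‖1 + z‖ = f (x (σ 1)) / supAbv f x := by
    rw [← abv_sortPerm_two, ← hσ, hφ, hφ, ← norm_div, ← norm_neg]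
    congr 1
    rw [hz, smallRatio, ← hσ, eq_div_iff hne]
    field_simp
    have := congrArg φ hsum
    simp only [map_add, map_zero] at this
    linear_combination -this
  have hle : ‖z‖ ≤ ‖1 + z‖ := by
    rw [hmid, hz, norm_smallRatio hφ]
    gcongr
    exact abv_sortPerm_mono (Fin.zero_le 1)
  have hle_one : ‖1 + z‖ ≤ 1 := by
    rw [hmid]
    exact div_le_one_of_le₀ (abv_le_supAbv f x _) hsup.le
  have hsq := pow_le_pow_left₀ (norm_nonneg _) hle 2
  have hsq_one := pow_le_pow_left₀ (norm_nonneg _) hle_one 2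
  simp only [Complex.sq_norm, Complex.normSq_apply, Complex.add_re, Complex.add_im, Complex.one_re,
    Complex.one_im, zero_add] at hsq hsq_one
  refine ⟨?_, ?_, ?_⟩ <;> nlinarith [sq_nonneg z.im, sq_nonneg z.re]

theorem abs_smallRatio_im_le (hφ : ∀ z, f z = ‖φ z‖) (hx : ∀ i, x i ≠ 0) (hx0 : ∑ i, x i = 0) :
    |(smallRatio φ f x).im| ≤ 0.87 :=
  abs_le_of_sq_le_sq ((smallRatio_mem hφ hx hx0).2.2.trans (by norm_num)) (by norm_num)

theorem abv_wedge_of_sortPerm_eq (hφ : ∀ z, f z = ‖φ z‖) (hx : ∀ i, x i ≠ 0) (hy : ∀ i, y i ≠ 0)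
    (hx0 : ∑ i, x i = 0) (hy0 : ∑ i, y i = 0) (hσ : sortPerm f x = sortPerm f y) :
    f (wedge x y) = supAbv f x * supAbv f y * ‖smallRatio φ f x - smallRatio φ f y‖ := by
  have hminor : f (wedge x y) = f (x (sortPerm f x 0) * y (sortPerm f x 2) -
      x (sortPerm f x 2) * y (sortPerm f x 0)) :=
    abv_wedge_eq_minor hx0 hy0 (by simp)
  have hx2 : φ (x (sortPerm f x 2)) ≠ 0 := by simpa using hx _
  have hy2 : φ (y (sortPerm f y 2)) ≠ 0 := by simpa using hy _
  rw [hminor, ← abv_sortPerm_two, ← abv_sortPerm_two, hφ, hφ, hφ, ← norm_mul, ← norm_mul,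
    smallRatio, smallRatio, hσ]
  rw [hσ] at hx2
  congr 1
  simp only [map_sub, map_mul]
  field_simp

/-- For `z` and `w` in the same closed quadrant, the triangle inequality is improved by a factor
`√2`. -/
theorem norm_sub_sq_le_of_quadrant {z w : ℂ} (hre : 0 ≤ z.re * w.re) (him : 0 ≤ z.im * w.im) :
    ‖z - w‖ ^ 2 ≤ ‖z‖ ^ 2 + ‖w‖ ^ 2 := by
  simp only [Complex.sq_norm, Complex.normSq_apply, Complex.sub_re, Complex.sub_im]
  linarith

theorem min_proximity_le_of_quadrant (hφ : ∀ z, f z = ‖φ z‖) (hx : ∀ i, x i ≠ 0)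
    (hy : ∀ i, y i ≠ 0) (hx0 : ∑ i, x i = 0) (hy0 : ∑ i, y i = 0) (hxy : wedge x y ≠ 0)
    (hσ : sortPerm f x = sortPerm f y)
    (hsign : 0 ≤ (smallRatio φ f x).im ↔ 0 ≤ (smallRatio φ f y).im) :
    min (proximity f x (sortPerm f x 0)) (proximity f y (sortPerm f y 0)) ≤
      Real.log (supAbv f x) + Real.log (supAbv f y) - Real.log (f (wedge x y)) +
        Real.log 2 / 2 := by
  set z := smallRatio φ f x with hz
  set w := smallRatio φ f y with hw
  have him : 0 ≤ z.im * w.im := by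
    by_cases h : 0 ≤ z.im
    · exact mul_nonneg h (hsign.1 h)
    · have h' := mt hsign.2 h
      rw [not_le] at h h'
      exact (mul_pos_of_neg_of_neg h h').le
  have hsub := norm_sub_sq_le_of_quadrant (mul_nonneg_of_nonpos_of_nonpos
    (smallRatio_mem hφ hx hx0).2.1 (smallRatio_mem hφ hy hy0).2.1) him
  have hz0 : 0 < ‖z‖ := norm_smallRatio (x := x) hφ ▸ div_pos (f.pos (hx _)) (supAbv_pos hx)
  have hw0 : 0 < ‖w‖ := norm_smallRatio (x := y) hφ ▸ div_pos (f.pos (hy _)) (supAbv_pos hy)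
  have hwedge := abv_wedge_of_sortPerm_eq hφ hx hy hx0 hy0 hσ
  have hzw : 0 < ‖z - w‖ := norm_pos_iff.2 fun h => hxy <| by
    rw [← hz, ← hw, h] at hwedge
    simpa using hwedge
  have hlog : 2 * Real.log ‖z - w‖ ≤ Real.log 2 + 2 * max (Real.log ‖z‖) (Real.log ‖w‖) := by
    have hmax : ‖z - w‖ ^ 2 ≤ 2 * max ‖z‖ ‖w‖ ^ 2 := by
      nlinarith [le_max_left ‖z‖ ‖w‖, le_max_right ‖z‖ ‖w‖]
    have := Real.log_le_log (by positivity) hmax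
    rw [Real.log_mul (by norm_num) (by positivity), Real.log_pow, Real.log_pow] at this
    rw [← Real.strictMonoOn_log.monotoneOn.map_max hz0 hw0]
    exact_mod_cast this
  rw [hwedge, Real.log_mul (mul_pos (supAbv_pos hx) (supAbv_pos hy)).ne' hzw.ne',
    Real.log_mul (supAbv_pos hx).ne' (supAbv_pos hy).ne']
  rw [log_norm_smallRatio hφ hx, log_norm_smallRatio hφ hy, max_neg_neg] at hlog
  linarith

/-- The cell containing the position of `x`, for a subdivision of `[-1/2, 0] × [-√3/2, √3/2]` into
rectangles with sides `1/21` and `1/20`; here `0.87` is an upper bound for `√3/2`. -/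
noncomputable def cell (φ : K →+* ℂ) (f : AbsoluteValue K ℝ) (x : Fin 3 → K) :
    Equiv.Perm (Fin 3) × ℕ × ℕ :=
  (sortPerm f x, ⌊21 * -(smallRatio φ f x).re⌋₊, ⌊20 * ((smallRatio φ f x).im + 0.87)⌋₊)

theorem cell_mem (hφ : ∀ z, f z = ‖φ z‖) (hx : ∀ i, x i ≠ 0) (hx0 : ∑ i, x i = 0) :
    cell φ f x ∈ (Finset.univ : Finset (Equiv.Perm (Fin 3))) ×ˢ Finset.range 11 ×ˢ
      Finset.range 35 := by
  obtain ⟨hre, hre', -⟩ := smallRatio_mem hφ hx hx0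
  obtain ⟨him, him'⟩ := abs_le.1 (abs_smallRatio_im_le hφ hx hx0)
  simp only [cell, Finset.mem_product, Finset.mem_univ, Finset.mem_range, true_and]
  rw [Nat.floor_lt (by linarith), Nat.floor_lt (by linarith)]
  constructor <;> push_cast <;> linarith

theorem sq_sub_le_one_of_floor_eq {a b : ℝ} (ha : 0 ≤ a) (hb : 0 ≤ b) (h : ⌊a⌋₊ = ⌊b⌋₊) :
    (a - b) ^ 2 ≤ 1 := by
  have hcast : (⌊a⌋₊ : ℝ) = ⌊b⌋₊ := by rw [h]
  rw [sq_le_one_iff_abs_le_one, abs_le]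
  constructor <;>
    linarith [Nat.floor_le ha, Nat.lt_floor_add_one a, Nat.floor_le hb, Nat.lt_floor_add_one b]

theorem le_log_of_cell_eq (hφ : ∀ z, f z = ‖φ z‖) (hx : ∀ i, x i ≠ 0) (hy : ∀ i, y i ≠ 0)
    (hx0 : ∑ i, x i = 0) (hy0 : ∑ i, y i = 0) (hxy : wedge x y ≠ 0)
    (hcell : cell φ f x = cell φ f y) :
    Real.log 14.4 ≤
      Real.log (supAbv f x) + Real.log (supAbv f y) - Real.log (f (wedge x y)) := by
  have hre_x := (smallRatio_mem hφ hx hx0).2.1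
  have hre_y := (smallRatio_mem hφ hy hy0).2.1
  have him_x := (abs_le.1 (abs_smallRatio_im_le hφ hx hx0)).1
  have him_y := (abs_le.1 (abs_smallRatio_im_le hφ hy hy0)).1
  simp only [cell, Prod.mk.injEq] at hcell
  obtain ⟨hσ, hre, him⟩ := hcell
  have hre' := sq_sub_le_one_of_floor_eq (by linarith) (by linarith) hre
  have him' := sq_sub_le_one_of_floor_eq (by linarith) (by linarith) him
  have hclose : 14.4 * ‖smallRatio φ f x - smallRatio φ f y‖ ≤ 1 := by
    rw [← sq_le_one_iff₀ (by positivity), mul_pow, Complex.sq_norm, Complex.normSq_apply,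
      Complex.sub_re, Complex.sub_im]
    nlinarith
  have hwedge : 14.4 * f (wedge x y) ≤ supAbv f x * supAbv f y := by
    rw [abv_wedge_of_sortPerm_eq hφ hx hy hx0 hy0 hσ]
    nlinarith [mul_pos (supAbv_pos (f := f) hx) (supAbv_pos (f := f) hy)]
  have hlog := Real.log_le_log (mul_pos (by norm_num) (f.pos hxy)) hwedge
  rw [Real.log_mul (by norm_num) (f.pos hxy).ne',
    Real.log_mul (supAbv_pos hx).ne' (supAbv_pos hy).ne'] at hlog
  linarith

end Archimedean

section Gaps

variable {α : Type*} {Y : Finset α} {g : α → ℝ} {c G : ℝ} {n : ℕ}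

theorem exists_pow_mul_le_of_gap (hc : 0 ≤ c)
    (hgap : (Y : Set α).Pairwise fun z z' => g z ≤ g z' → c * g z ≤ g z')
    (hG : ∀ z ∈ Y, G ≤ g z) (hY : Y.card = n + 1) : ∃ z ∈ Y, c ^ n * G ≤ g z := by
  induction n generalizing Y with
  | zero =>
    obtain ⟨z, hz⟩ := Finset.card_pos.1 (by omega : 0 < Y.card)
    exact ⟨z, hz, by simpa using hG z hz⟩
  | succ n ih =>
    obtain ⟨m, hm, hmax⟩ := Y.exists_max_image g (Finset.card_pos.1 (by omega))
    obtain ⟨z, hz, hzG⟩ := ih (hgap.mono (Finset.erase_subset m Y))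
      (fun z hz => hG z (Finset.mem_of_mem_erase hz)) (by rw [Finset.card_erase_of_mem hm]; omega)
    obtain ⟨hzm, hzY⟩ := Finset.mem_erase.1 hz
    refine ⟨m, hm, ?_⟩
    calc c ^ (n + 1) * G = c * (c ^ n * G) := by ring
      _ ≤ c * g z := by gcongr
      _ ≤ g m := hgap hzY hm hzm (hmax z hzY)

theorem card_le_of_gap (hc : 0 ≤ c)
    (hgap : (Y : Set α).Pairwise fun z z' => g z ≤ g z' → c * g z ≤ g z')
    (hG : ∀ z ∈ Y, G ≤ g z) (hlt : ∀ z ∈ Y, g z < c ^ n * G) : Y.card ≤ n := by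
  by_contra! hcard
  obtain ⟨Y', hY', hc'⟩ := Finset.exists_subset_card_eq (Nat.succ_le_of_lt hcard)
  obtain ⟨z, hz, hzG⟩ := exists_pow_mul_le_of_gap hc (hgap.mono (Finset.coe_subset.2 hY'))
    (fun z hz => hG z (hY' hz)) hc'
  exact (hlt z (hY' hz)).not_ge hzG

theorem lt_of_forall_nat_gap {a d x y : ℝ} (hd : 0 ≤ d) (hx : 0 < x) (hax : 5 * (a + 3 * d) ≤ x)
    (hbig : ∀ N : ℕ, (2 * N + 1) * x ≤ y → y < (2 * N + 3) * x →
      0.95 * ((2 * N + 1) * (3 * x - a - 0.7 * d)) ≤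
        (3 * N + 2) * x + y + 0.7 * (4 * N + 3) * d) : y < 17 * x := by
  by_contra! hxy
  have ht : 17 ≤ y / x := (le_div_iff₀ hx).2 hxy
  set t := (y / x - 1) / 2 with htdef
  have hyt : y = (2 * t + 1) * x := by rw [htdef]; field_simp; ring
  have hN : 8 ≤ ⌊t⌋₊ := Nat.le_floor (by push_cast; linarith)
  have hNt := Nat.floor_le (show 0 ≤ t by linarith)
  have htN := Nat.lt_floor_add_one t
  set N := ⌊t⌋₊
  have hyN : y < (2 * N + 3) * x := hyt ▸ mul_lt_mul_of_pos_right (by linarith) hx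
  have hbigN := hbig N (hyt ▸ by gcongr) hyN
  have hN' : (8 : ℝ) ≤ N := by exact_mod_cast hN
  nlinarith [mul_le_mul_of_nonneg_left hax (by positivity : (0 : ℝ) ≤ 2 * N + 1),
    mul_le_mul_of_nonneg_right hN' hx.le, mul_nonneg (by positivity : (0 : ℝ) ≤ N) hd]

/-- After the shift by `1.2 d` the additive gap becomes a gap by the factor `1.85`, so at most
`10` elements lie within a factor `1.85 ^ 10` of the smallest one. Above that threshold `a` and `d`
are negligible, `hbig` bounds the spread by the factor `17`, and at most `5` elements remain. -/
theorem card_le_fifteen_of_gap {h : α → ℝ} {a d : ℝ} (hd : 0 < d)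
    (ha : ∀ z ∈ Y, a ≤ 3 * h z) (hh : ∀ z ∈ Y, 1.33 * d ≤ h z)
    (hgap : (Y : Set α).Pairwise fun z z' => h z ≤ h z' → 1.85 * h z - 1.02 * d ≤ h z')
    (hbig : (Y : Set α).Pairwise fun z z' => ∀ N : ℕ, (2 * N + 1) * h z ≤ h z' →
      h z' < (2 * N + 3) * h z → 0.95 * ((2 * N + 1) * (3 * h z - a - 0.7 * d)) ≤
        (3 * N + 2) * h z + h z' + 0.7 * (4 * N + 3) * d) : Y.card ≤ 15 := by
  rcases Y.eq_empty_or_nonempty with rfl | hY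
  · simp
  set g : α → ℝ := fun z => h z - 1.2 * d
  have hg : (Y : Set α).Pairwise fun z z' => g z ≤ g z' → 1.85 * g z ≤ g z' :=
    fun z hz z' hz' hne hle => by
      have := hgap hz hz' hne (by simpa [g] using hle)
      simp only [g]; linarith
  obtain ⟨m, hm, hmin⟩ := Y.exists_min_image g hY
  have hhm : h m = g m + 1.2 * d := by simp [g]
  have hmd : 0.13 * d ≤ g m := by linarith [hh m hm]
  have hma : a / 31 ≤ g m := by linarith [hh m hm, ha m hm]
  have hsmall : (Y.filter fun z => g z < 1.85 ^ 10 * g m).card ≤ 10 :=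
    card_le_of_gap (by norm_num) (hg.mono (Finset.filter_subset _ _))
      (fun z hz => hmin z (Finset.filter_subset _ _ hz)) fun z hz => (Finset.mem_filter.1 hz).2
  have hlarge : (Y.filter fun z => ¬ g z < 1.85 ^ 10 * g m).card ≤ 5 := by
    set L := Y.filter fun z => ¬ g z < 1.85 ^ 10 * g m
    have hLY : L ⊆ Y := Finset.filter_subset _ _
    rcases L.eq_empty_or_nonempty with hL | hL
    · simp [hL]
    obtain ⟨x, hx, hxmin⟩ := L.exists_min_image g hL
    have hxm : 1.85 ^ 10 * g m ≤ g x := not_lt.1 (Finset.mem_filter.1 hx).2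
    have : h x = g x + 1.2 * d := by simp [g]
    refine card_le_of_gap (by norm_num) (hg.mono hLY) hxmin fun z hz => ?_
    have hzx : h z < 17 * h x := by
      rcases eq_or_ne x z with rfl | hne
      · linarith [hh x (hLY hx)]
      · exact lt_of_forall_nat_gap hd.le (by linarith) (by linarith)
          (hbig (hLY hx) (hLY hz) hne)
    have : h z = g z + 1.2 * d := by simp [g]
    linarith
  rw [← Finset.card_filter_add_card_filter_not fun z => g z < 1.85 ^ 10 * g m]
  linarith

end Gaps

section Weights

variable {V : Type*} [Fintype V]

theorem exists_le_sum_eq {f : V → ℕ} {n : ℕ} (hn : n ≤ ∑ v, f v) :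
    ∃ g ≤ f, ∑ v, g v = n := by
  induction n with
  | zero => exact ⟨0, fun v => Nat.zero_le _, by simp⟩
  | succ n ih =>
    obtain ⟨g, hgf, hg⟩ := ih (Nat.le_of_succ_le hn)
    obtain ⟨v, -, hv⟩ := Finset.exists_lt_of_sum_lt (hg.trans_lt hn)
    refine ⟨g + Pi.single v 1, fun w => ?_, by simp [Finset.sum_add_distrib, hg]⟩
    rcases eq_or_ne w v with rfl | hne
    · simpa using hv
    · simpa [hne] using hgf w

theorem exists_weight_mul_sum_le [Nonempty V] {n N : ℕ} (hN : n + Fintype.card V ≤ N)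
    {ρ : V → ℝ} (hρ : ∀ v, 0 ≤ ρ v) :
    ∃ γ ∈ Finset.piAntidiag Finset.univ n, ∀ v, (γ v : ℝ) * ∑ w, ρ w ≤ N * ρ v := by
  set X := ∑ w, ρ w with hXdef
  have hX : 0 ≤ X := Finset.sum_nonneg fun v _ => hρ v
  rcases hX.eq_or_lt with hX0 | hX0
  · obtain ⟨γ, -, hγ⟩ := exists_le_sum_eq (V := V) (f := fun _ => n)
      (by simpa using Nat.le_mul_of_pos_left n Fintype.card_pos)
    refine ⟨γ, by simp [Finset.mem_piAntidiag, hγ], fun v => ?_⟩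
    rw [← hX0, mul_zero]
    exact mul_nonneg N.cast_nonneg (hρ v)
  have hsum : n ≤ ∑ v, ⌊N * ρ v / X⌋₊ := by
    have hfloor : (N : ℝ) ≤ ∑ v, ((⌊N * ρ v / X⌋₊ : ℝ) + 1) := by
      calc (N : ℝ) = ∑ v, N * ρ v / X := by
            rw [← Finset.sum_div, ← Finset.mul_sum, ← hXdef, mul_div_cancel_right₀ _ hX0.ne']
        _ ≤ _ := Finset.sum_le_sum fun v _ => (Nat.lt_floor_add_one _).le
    rw [Finset.sum_add_distrib] at hfloor
    have : N ≤ ∑ v, ⌊N * ρ v / X⌋₊ + Fintype.card V := by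
      simpa [← @Nat.cast_le ℝ] using hfloor
    omega
  obtain ⟨γ, hγ, hγn⟩ := exists_le_sum_eq hsum
  refine ⟨γ, by simp [Finset.mem_piAntidiag, hγn], fun v => (le_div_iff₀ hX0).1 ?_⟩
  exact (Nat.cast_le.2 (hγ v)).trans (Nat.floor_le (by have := hρ v; positivity))

theorem card_piAntidiag_univ (n : ℕ) :
    (Finset.piAntidiag (Finset.univ : Finset V) n).card = (Fintype.card V + n - 1).choose n := by
  rw [← Finset.map_sym_eq_piAntidiag, Finset.card_map, Finset.sym_univ, Finset.card_univ,
    Sym.card_sym_eq_choose]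

theorem choose_mul_pow_le {R : Type*} [CommSemiring R] [PartialOrder R] [IsOrderedRing R]
    (n k : ℕ) {x : R} (hx : 0 ≤ x) : n.choose k * x ^ k ≤ (x + 1) ^ n := by
  rcases lt_or_ge n k with hnk | hnk
  · simpa [Nat.choose_eq_zero_of_lt hnk] using pow_nonneg (add_nonneg hx zero_le_one) n
  rw [add_pow, mul_comm]
  simpa using Finset.single_le_sum (f := fun m => x ^ m * 1 ^ (n - m) * n.choose m)
    (fun m _ => mul_nonneg (by simpa using pow_nonneg hx m) (Nat.cast_nonneg _))
    (Finset.mem_range_succ_iff.2 hnk)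

theorem mul_choose_le (s : ℕ) :
    15 * 12 ^ (s + 1) * ((20 * s + 19).choose (19 * s + 19) : ℝ) ≤ 2 * 2401 ^ (s + 1) := by
  have hC := choose_mul_pow_le (20 * s + 19) (19 * s + 19) (x := (19 : ℝ)) (by norm_num)
  rw [pow_add, pow_mul, show (19 : ℝ) + 1 = 20 by norm_num, pow_add, pow_mul] at hC
  refine le_of_mul_le_mul_right ?_ (by positivity : (0 : ℝ) < (19 ^ 19) ^ s * 19 ^ 19)
  calc 15 * 12 ^ (s + 1) * ((20 * s + 19).choose (19 * s + 19) : ℝ) * ((19 ^ 19) ^ s * 19 ^ 19)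
      = 180 * 12 ^ s * ((20 * s + 19).choose (19 * s + 19) * ((19 ^ 19) ^ s * 19 ^ 19)) := by ring
    _ ≤ 180 * 12 ^ s * ((20 ^ 20) ^ s * 20 ^ 19) := by gcongr
    _ = 180 * 20 ^ 19 * (12 * 20 ^ 20) ^ s := by rw [mul_pow]; ring
    _ ≤ 4802 * 19 ^ 19 * (2401 * 19 ^ 19) ^ s :=
        mul_le_mul (by norm_num) (pow_le_pow_left₀ (by norm_num) (by norm_num) s)
          (by positivity) (by positivity)
    _ = 2 * 2401 ^ (s + 1) * ((19 ^ 19) ^ s * 19 ^ 19) := by rw [mul_pow]; ring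

theorem mul_card_piAntidiag_le [Nonempty V] :
    (15 * 12 ^ Fintype.card V * (Finset.piAntidiag (Finset.univ : Finset V)
      (19 * Fintype.card V)).card : ℝ) ≤ 2 * 2401 ^ Fintype.card V := by
  obtain ⟨s, hs⟩ := Nat.exists_eq_succ_of_ne_zero (Fintype.card_ne_zero (α := V))
  rw [card_piAntidiag_univ, hs, show s.succ + 19 * s.succ - 1 = 20 * s + 19 by omega]
  exact mul_choose_le s

theorem mul_le_sum_min {n N : ℕ} {γ : V → ℕ} (hγ : ∑ v, γ v = n) {ρ ρ' : V → ℝ} {c M : ℝ}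
    (hρ : ∀ v, (γ v : ℝ) * ∑ w, ρ w ≤ N * ρ v) (hρ' : ∀ v, (γ v : ℝ) * ∑ w, ρ' w ≤ N * ρ' v)
    (hc : 0 ≤ c) (hM : M ≤ c * ∑ v, ρ v) (hM' : M ≤ ∑ v, ρ' v) :
    n * M ≤ N * ∑ v, min (c * ρ v) (ρ' v) := by
  rw [← hγ, Nat.cast_sum, Finset.sum_mul, Finset.mul_sum]
  refine Finset.sum_le_sum fun v _ => ?_
  rw [mul_min_of_nonneg _ _ N.cast_nonneg]
  refine le_min ?_ ((mul_le_mul_of_nonneg_left hM' (γ v).cast_nonneg).trans (hρ' v))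
  calc (γ v : ℝ) * M ≤ γ v * (c * ∑ w, ρ w) := by gcongr
    _ = c * (γ v * ∑ w, ρ w) := by ring
    _ ≤ c * (N * ρ v) := mul_le_mul_of_nonneg_left (hρ v) hc
    _ = N * (c * ρ v) := by ring

/-- Vectors with the same rounded weights `γ` are proportional up to the factor `0.95`, which turns
the hypotheses on `∑ v, min _ _` into a gap principle for `h`. -/
theorem card_le_fifteen_of_sum_min_le {α : Type*} {Y : Finset α} {h : α → ℝ} {ρ : α → V → ℝ}
    {a d : ℝ} (ha : 0 ≤ a) (hd : 0 < d) {s : ℕ} (hs : 0 < s) {γ : V → ℕ} (hγ : ∑ v, γ v = 19 * s)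
    (hγρ : ∀ z ∈ Y, ∀ v, (γ v : ℝ) * ∑ w, ρ z w ≤ (20 * s : ℕ) * ρ z v)
    (hha : ∀ z ∈ Y, a ≤ 3 * h z) (hhd : ∀ z ∈ Y, 1.33 * d ≤ h z)
    (hsum : ∀ z ∈ Y, 3 * h z - a - 0.7 * d ≤ ∑ v, ρ z v)
    (hgap : (Y : Set α).Pairwise fun z z' =>
      ∑ v, min (ρ z v) (ρ z' v) ≤ h z + h z' - a + 0.35 * d)
    (hbig : (Y : Set α).Pairwise fun z z' => ∀ N : ℕ,
      ∑ v, min ((2 * N + 1) * ρ z v) (ρ z' v) ≤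
        (3 * N + 2) * h z + h z' - a + 0.7 * (4 * N + 3) * d) : Y.card ≤ 15 := by
  have hmin : ∀ z ∈ Y, ∀ z' ∈ Y, ∀ {c M : ℝ}, 0 ≤ c → M ≤ c * ∑ v, ρ z v →
      M ≤ ∑ v, ρ z' v → 0.95 * M ≤ ∑ v, min (c * ρ z v) (ρ z' v) := by
    intro z hz z' hz' c M hc hM hM'
    have key := mul_le_sum_min hγ (hγρ z hz) (hγρ z' hz') hc hM hM'
    push_cast at key
    refine le_of_mul_le_mul_left ?_ (by positivity : 0 < 20 * (s : ℝ))
    linarith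
  refine card_le_fifteen_of_gap hd hha hhd (fun z hz z' hz' hne hle => ?_)
    fun z hz z' hz' hne N hle _ => ?_
  · have hlower := hmin z hz z' hz' (M := 3 * h z - a - 0.7 * d) zero_le_one
      (by linarith [hsum z hz]) (by linarith [hsum z' hz'])
    simp only [one_mul] at hlower
    linarith [hgap hz hz' hne]
  · have hlower := hmin z hz z' hz' (c := 2 * N + 1) (by positivity)
      (mul_le_mul_of_nonneg_left (hsum z hz) (by positivity))
      (by nlinarith [hsum z' hz', (by positivity : 0 ≤ (N : ℝ) * (a + 0.7 * d))])
    linarith [hbig hz hz' hne N]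

theorem card_le_of_sum_min_le [Nonempty V] {α E : Type*} [Fintype E] (hE : Fintype.card E = 12)
    {Z : Finset α} {h : α → ℝ} {ρ : α → V → ℝ} {e : α → V → E} {a d : ℝ} (ha : 0 ≤ a) (hd : 0 < d)
    (hha : ∀ z ∈ Z, a ≤ 3 * h z) (hhd : ∀ z ∈ Z, 1.33 * d ≤ h z) (hρ : ∀ z ∈ Z, ∀ v, 0 ≤ ρ z v)
    (hsum : ∀ z ∈ Z, 3 * h z - a - 0.7 * d ≤ ∑ v, ρ z v)
    (hgap : (Z : Set α).Pairwise fun z z' => e z = e z' →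
      ∑ v, min (ρ z v) (ρ z' v) ≤ h z + h z' - a + 0.35 * d)
    (hbig : (Z : Set α).Pairwise fun z z' => e z = e z' → ∀ N : ℕ,
      ∑ v, min ((2 * N + 1) * ρ z v) (ρ z' v) ≤
        (3 * N + 2) * h z + h z' - a + 0.7 * (4 * N + 3) * d) :
    (Z.card : ℝ) ≤ 2 * 2401 ^ Fintype.card V := by
  set s := Fintype.card V
  choose! γ hγ hγρ using fun z hz =>
    exists_weight_mul_sum_le (n := 19 * s) (N := 20 * s) (by omega) (hρ z hz)
  have hcard : Z.card ≤ 15 * ((Finset.univ : Finset (V → E)) ×ˢ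
      Finset.piAntidiag (Finset.univ : Finset V) (19 * s)).card := by
    refine Finset.card_le_mul_card_image_of_maps_to (f := fun z => (e z, γ z))
      (fun z hz => Finset.mk_mem_product (Finset.mem_univ _) (hγ z hz)) _ fun p hp => ?_
    have hfib : ∀ z ∈ Z.filter fun z => (e z, γ z) = p, z ∈ Z ∧ e z = p.1 ∧ γ z = p.2 := by
      intro z hz
      obtain ⟨hzZ, rfl⟩ := Finset.mem_filter.1 hz
      exact ⟨hzZ, rfl, rfl⟩
    have hZ := fun z hz => (hfib z hz).1
    have he := fun z hz z' hz' => (hfib z hz).2.1.trans (hfib z' hz').2.1.symm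
    exact card_le_fifteen_of_sum_min_le ha hd Fintype.card_pos
      (Finset.mem_piAntidiag.1 (Finset.mem_product.1 hp).2).1
      (fun z hz => (hfib z hz).2.2 ▸ hγρ z (hZ z hz)) (fun z hz => hha z (hZ z hz))
      (fun z hz => hhd z (hZ z hz)) (fun z hz => hsum z (hZ z hz))
      (fun z hz z' hz' hne => hgap (hZ z hz) (hZ z' hz') hne (he z hz z' hz'))
      fun z hz z' hz' hne => hbig (hZ z hz) (hZ z' hz') hne (he z hz z' hz')
  rw [Finset.card_product, Finset.card_univ, Fintype.card_fun, hE] at hcard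
  calc (Z.card : ℝ) ≤ 15 * 12 ^ s * (Finset.piAntidiag (Finset.univ : Finset V) (19 * s)).card := by
        rw [mul_assoc]; exact_mod_cast hcard
    _ ≤ _ := mul_card_piAntidiag_le

end Weights

section NumberField

variable {K : Type*} [Field K]

variable (K) in
/-- The places of `K`, an archimedean one being an absolute value and a nonarchimedean one a nonzero
prime ideal. -/
abbrev Place : Type _ := InfinitePlace K ⊕ HeightOneSpectrum (𝓞 K)

/-- The exponent of a place in the product formula. It is `1` at the finite places, whose absolute
values already carry the local degree. -/
noncomputable def Place.mult : Place K → ℝ := Sum.elim (fun w => w.mult) fun _ => 1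

theorem Place.mult_nonneg (v : Place K) : 0 ≤ v.mult := by
  cases v <;> simp [mult]

variable [NumberField K]

/-- The absolute value attached to a place, normalized at a prime ideal by its absolute norm. -/
noncomputable def Place.abv : Place K → AbsoluteValue K ℝ :=
  Sum.elim (fun w => w.1) fun v => adicAbv K v

/-- The set `S` of the archimedean places together with the finite places in `T`. -/
noncomputable def placesOver (T : Finset (HeightOneSpectrum (𝓞 K))) : Finset (Place K) :=
  Finset.univ.disjSum T

theorem Place.isNonarchimedean_abv_inr (v : HeightOneSpectrum (𝓞 K)) :
    IsNonarchimedean (Place.abv (.inr v)) :=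
  isNonarchimedean_adicAbv K v

theorem card_placesOver (T : Finset (HeightOneSpectrum (𝓞 K))) :
    (placesOver T).card = sCard K T := by
  rw [placesOver, Finset.card_disjSum, sCard, Finset.card_univ, add_comm]

theorem placesOver_nonempty (T : Finset (HeightOneSpectrum (𝓞 K))) : (placesOver T).Nonempty :=
  ⟨.inl (Classical.arbitrary _), by simp [placesOver]⟩

theorem sum_placesOver_eq_add {T F : Finset (HeightOneSpectrum (𝓞 K))} (hTF : T ⊆ F)
    (g : Place K → ℝ) :
    ∑ v ∈ placesOver F, v.mult * g v =
      ∑ v ∈ placesOver T, v.mult * g v + ∑ v ∈ F \ T, g (.inr v) := by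
  simp only [placesOver, Finset.sum_disjSum, ← Finset.sum_sdiff hTF, Place.mult, Sum.elim_inr,
    one_mul]
  ring

theorem sum_placesOver_le (T : Finset (HeightOneSpectrum (𝓞 K))) {g : Place K → ℝ} {C : ℝ}
    (hinf : ∀ w, g (.inl w) ≤ C) (hfin : ∀ v ∈ T, g (.inr v) ≤ 0) :
    ∑ v ∈ placesOver T, v.mult * g v ≤ C * Module.finrank ℚ K := by
  rw [placesOver, Finset.sum_disjSum, ← InfinitePlace.sum_mult_eq, Nat.cast_sum, Finset.mul_sum]
  have h := Finset.sum_nonpos hfin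
  have h' := Finset.sum_le_sum fun w (_ : w ∈ (Finset.univ : Finset (InfinitePlace K))) =>
    mul_le_mul_of_nonneg_left (hinf w) w.mult.cast_nonneg
  simp only [Place.mult, Sum.elim_inl, Sum.elim_inr, one_mul, mul_comm C]
  linarith

theorem finitePlace_equiv_symm_apply (v : HeightOneSpectrum (𝓞 K)) (x : K) :
    FinitePlace.equivHeightOneSpectrum.symm v x = adicAbv K v x := by
  rw [FinitePlace.equivHeightOneSpectrum_symm_apply, FinitePlace.norm_embedding]

theorem finite_mulSupport_adicAbv {x : K} (hx : x ≠ 0) :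
    (Function.mulSupport fun v : HeightOneSpectrum (𝓞 K) => adicAbv K v x).Finite := by
  simpa only [Function.HasFiniteMulSupport, Function.comp_def, finitePlace_equiv_symm_apply] using
    (FinitePlace.hasFiniteMulSupport hx).comp_of_injective
      (FinitePlace.equivHeightOneSpectrum (K := K)).symm.injective

theorem sum_log_abv_eq_zero {F : Finset (HeightOneSpectrum (𝓞 K))} {x : K} (hx : x ≠ 0)
    (hF : ∀ v ∉ F, adicAbv K v x = 1) :
    ∑ v ∈ placesOver F, v.mult * Real.log (v.abv x) = 0 := by
  have hfin : ∏ᶠ w : FinitePlace K, w x =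
      ∏ v ∈ F, adicAbv K v x := by
    rw [← finprod_comp_equiv FinitePlace.equivHeightOneSpectrum.symm]
    simp only [finitePlace_equiv_symm_apply]
    exact finprod_eq_prod_of_mulSupport_subset _ fun v hv => by_contra fun h => hv (hF v h)
  have hprod := congrArg Real.log (NumberField.prod_abs_eq_one hx)
  rw [hfin, Real.log_one, Real.log_mul, Real.log_prod, Real.log_prod] at hprod
  · simpa [placesOver, Finset.sum_disjSum, Place.mult, Place.abv, Real.log_pow,
      InfinitePlace.coe_apply] using hprod
  all_goals simp [Finset.prod_ne_zero_iff, hx]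

theorem sum_log_abv_nonneg {F : Finset (HeightOneSpectrum (𝓞 K))} {x : K} (hx : x ≠ 0)
    (hF : ∀ v ∉ F, adicAbv K v x ≤ 1) :
    0 ≤ ∑ v ∈ placesOver F, v.mult * Real.log (v.abv x) := by
  have hsupp := finite_mulSupport_adicAbv hx
  have hzero := sum_log_abv_eq_zero (F := F ∪ hsupp.toFinset) hx fun v hv => by
    simpa using fun h => hv (Finset.mem_union_right F (hsupp.mem_toFinset.2 h))
  rw [sum_placesOver_eq_add Finset.subset_union_left] at hzero
  have hnonpos : ∑ v ∈ (F ∪ hsupp.toFinset) \ F, Real.log (Place.abv (.inr v) x) ≤ 0 :=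
    Finset.sum_nonpos fun v hv =>
      Real.log_nonpos (AbsoluteValue.nonneg _ _) (hF v (Finset.mem_sdiff.1 hv).2)
  linarith

/-- A nonzero solution of `x₀ + x₁ + x₂ = 0` whose entries have the prescribed absolute values `r`
outside `T`: the notion of an `S`-unit solution, twisted by `r`. -/
structure IsSolution (T : Finset (HeightOneSpectrum (𝓞 K)))
    (r : HeightOneSpectrum (𝓞 K) → Fin 3 → ℝ) (x : Fin 3 → K) : Prop where
  ne_zero : ∀ i, x i ≠ 0
  sum_eq_zero : ∑ i, x i = 0
  abv_eq : ∀ v ∉ T, ∀ i, adicAbv K v (x i) = r v i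

/-- The logarithmic height of the projective point `x`, not divided by the degree of `K`, when the
entries of `x` are units outside `F`. -/
noncomputable def logHeight (F : Finset (HeightOneSpectrum (𝓞 K))) (x : Fin 3 → K) : ℝ :=
  ∑ v ∈ placesOver F, v.mult * Real.log (supAbv v.abv x)

/-- The part of the height accounted for by the places outside `T`, where the absolute values `r`
are prescribed; it vanishes for `S`-units. -/
noncomputable def defect (T F : Finset (HeightOneSpectrum (𝓞 K)))
    (r : HeightOneSpectrum (𝓞 K) → Fin 3 → ℝ) : ℝ :=
  ∑ v ∈ F \ T, ∑ i, (Real.log (⨆ j, r v j) - Real.log (r v i))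

variable {T F : Finset (HeightOneSpectrum (𝓞 K))} {r : HeightOneSpectrum (𝓞 K) → Fin 3 → ℝ}
  {x y U : Fin 3 → K}

theorem IsSolution.defect_eq (hx : IsSolution T r x) :
    defect T F r = ∑ v ∈ F \ T, ∑ i, proximity (Place.abv (.inr v)) x i := by
  refine Finset.sum_congr rfl fun v hv => ?_
  have hv' := hx.abv_eq v (Finset.mem_sdiff.1 hv).2
  simp only [proximity, supAbv, Place.abv, Sum.elim_inr, hv']

theorem IsSolution.defect_nonneg (hx : IsSolution T r x) : 0 ≤ defect T F r := by
  rw [hx.defect_eq]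
  exact Finset.sum_nonneg fun v _ => Finset.sum_nonneg fun i _ => proximity_nonneg hx.ne_zero i

theorem IsSolution.sum_proximity (hTF : T ⊆ F) (hr : ∀ v ∉ F, ∀ i, r v i = 1)
    (hx : IsSolution T r x) :
    ∑ v ∈ placesOver T, v.mult * ∑ i, proximity v.abv x i = 3 * logHeight F x - defect T F r := by
  have hlog (i : Fin 3) : ∑ v ∈ placesOver F, v.mult * Real.log (v.abv (x i)) = 0 :=
    sum_log_abv_eq_zero (hx.ne_zero i) fun v hv =>
      (hx.abv_eq v (fun h => hv (hTF h)) i).trans (hr v hv i)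
  have hsum : ∑ v ∈ placesOver F, v.mult * ∑ i, proximity v.abv x i = 3 * logHeight F x := by
    simp only [proximity, Finset.sum_sub_distrib, mul_sub, Finset.mul_sum]
    rw [Finset.sum_comm (s := placesOver F) (f := fun v i => v.mult * Real.log (v.abv (x i))),
      Finset.sum_eq_zero fun i _ => hlog i]
    simp [logHeight, Finset.mul_sum]
  rw [← hsum, sum_placesOver_eq_add hTF, hx.defect_eq, add_sub_cancel_right]

theorem IsSolution.defect_le (hTF : T ⊆ F) (hr : ∀ v ∉ F, ∀ i, r v i = 1)
    (hx : IsSolution T r x) : defect T F r ≤ 3 * logHeight F x := by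
  have h : 0 ≤ ∑ v ∈ placesOver T, v.mult * ∑ i, proximity v.abv x i :=
    Finset.sum_nonneg fun v _ => mul_nonneg v.mult_nonneg <|
      Finset.sum_nonneg fun i _ => proximity_nonneg hx.ne_zero i
  rw [hx.sum_proximity hTF hr] at h
  exact sub_nonneg.1 h

/-- The product formula for `wedge y U`, in which each place outside `T` contributes as much as it
possibly can. -/
theorem IsSolution.sum_sub_log_wedge_le (hTF : T ⊆ F) (hr : ∀ v ∉ F, ∀ i, r v i = 1) {p q : ℕ}
    (hp : 1 ≤ p) (hx : IsSolution T r x) (hy : IsSolution T r y) (hU0 : ∑ i, U i = 0)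
    (hyU : wedge y U ≠ 0) (hU : ∀ v : HeightOneSpectrum (𝓞 K), ∀ i,
      Place.abv (.inr v) (U i) ≤ Place.abv (.inr v) (x i) ^ p * supAbv (Place.abv (.inr v)) x ^ q) :
    ∑ v ∈ placesOver T, v.mult * ((p + q) * Real.log (supAbv v.abv x) +
        Real.log (supAbv v.abv y) - Real.log (v.abv (wedge y U))) ≤
      (p + q) * logHeight F x + logHeight F y - defect T F r := by
  have hunit {z : Fin 3 → K} (hz : IsSolution T r z) (v) (hv : v ∉ F) (i : Fin 3) :
      Place.abv (.inr v) (z i) = 1 := (hz.abv_eq v (fun h => hv (hTF h)) i).trans (hr v hv i)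
  have hprod : 0 ≤ ∑ v ∈ placesOver F, v.mult * Real.log (v.abv (wedge y U)) :=
    sum_log_abv_nonneg hyU fun v hv => abv_wedge_le_one (Place.isNonarchimedean_abv_inr v)
      (fun i => (hunit hy v hv i).le)
      fun i => (hU v i).trans (by simp [supAbv_eq_one (hunit hx v hv), hunit hx v hv i])
  have hdefect : defect T F r ≤ ∑ v ∈ F \ T, ((p + q) * Real.log (supAbv (Place.abv (.inr v)) x) +
      Real.log (supAbv (Place.abv (.inr v)) y) - Real.log (Place.abv (.inr v) (wedge y U))) := by
    rw [hy.defect_eq]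
    refine Finset.sum_le_sum fun v hv => sum_proximity_le_of_isNonarchimedean
      (Place.isNonarchimedean_abv_inr v) hp hx.ne_zero hy.ne_zero (fun i => ?_)
      hy.sum_eq_zero hU0 hyU (hU v)
    have hvT := (Finset.mem_sdiff.1 hv).2
    exact (hx.abv_eq v hvT i).trans (hy.abv_eq v hvT i).symm
  have hsplit := sum_placesOver_eq_add hTF fun v => (p + q) * Real.log (supAbv v.abv x) +
    Real.log (supAbv v.abv y) - Real.log (v.abv (wedge y U))
  have hheight : ∑ v ∈ placesOver F, v.mult * ((p + q) * Real.log (supAbv v.abv x) +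
      Real.log (supAbv v.abv y) - Real.log (v.abv (wedge y U))) =
      (p + q) * logHeight F x + logHeight F y -
        ∑ v ∈ placesOver F, v.mult * Real.log (v.abv (wedge y U)) := by
    simp only [logHeight, Finset.mul_sum, ← Finset.sum_add_distrib, ← Finset.sum_sub_distrib]
    exact Finset.sum_congr rfl fun v _ => by ring
  linarith

theorem IsSolution.sum_sub_log_wedge_self_le (hTF : T ⊆ F) (hr : ∀ v ∉ F, ∀ i, r v i = 1)
    (hx : IsSolution T r x) (hy : IsSolution T r y) (hxy : wedge x y ≠ 0) :
    ∑ v ∈ placesOver T, v.mult * (Real.log (supAbv v.abv x) + Real.log (supAbv v.abv y) -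
        Real.log (v.abv (wedge x y))) ≤ logHeight F x + logHeight F y - defect T F r := by
  have h := hy.sum_sub_log_wedge_le (p := 1) (q := 0) hTF hr le_rfl hx hy.sum_eq_zero hxy
    (fun v i => by simp)
  simpa [add_comm] using h

/-- The ordering of the entries of `x` at the place `v`, together with the half-plane containing
`smallRatio` when `v` is archimedean, with junk value `true` when it is not. As `smallRatio` has
nonpositive real part, this determines its quadrant. -/
noncomputable def quadrant (v : Place K) (x : Fin 3 → K) : Equiv.Perm (Fin 3) × Bool :=
  (sortPerm v.abv x, v.elim (fun w => decide (0 ≤ (smallRatio w.embedding w.1 x).im))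
    fun _ => true)

variable (x) in
/-- The proximity of `x` to the nearest coordinate line, weighted as in the product formula. -/
noncomputable def minProximity (v : Place K) : ℝ :=
  v.mult * proximity v.abv x (sortPerm v.abv x 0)

theorem minProximity_nonneg (hx : ∀ i, x i ≠ 0) (v : Place K) : 0 ≤ minProximity x v :=
  mul_nonneg v.mult_nonneg (proximity_nonneg hx _)

theorem sum_log_ultrametricConst_le (T : Finset (HeightOneSpectrum (𝓞 K))) :
    ∑ v ∈ placesOver T, v.mult * Real.log (ultrametricConst v.abv) ≤
      0.7 * Module.finrank ℚ K := by
  refine sum_placesOver_le T (fun w => ?_) fun v _ => ?_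
  · have h := Real.log_le_log (zero_lt_one.trans_le (one_le_ultrametricConst _))
      (ultrametricConst_le_two (Place.abv (.inl w)))
    linarith [Real.log_two_lt_d9]
  · rw [ultrametricConst_eq_one _ (Place.isNonarchimedean_abv_inr v), Real.log_one]

theorem IsSolution.le_sum_minProximity (hTF : T ⊆ F) (hr : ∀ v ∉ F, ∀ i, r v i = 1)
    (hx : IsSolution T r x) :
    3 * logHeight F x - defect T F r - 0.7 * Module.finrank ℚ K ≤
      ∑ v ∈ placesOver T, minProximity x v := by
  have hle : ∑ v ∈ placesOver T, v.mult * ∑ i, proximity v.abv x i ≤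
      ∑ v ∈ placesOver T, (minProximity x v + v.mult * Real.log (ultrametricConst v.abv)) :=
    Finset.sum_le_sum fun v _ => by
      rw [sum_proximity_eq, mul_add]
      exact add_le_add_right (mul_le_mul_of_nonneg_left
        (proximity_sortPerm_one_le hx.ne_zero hx.sum_eq_zero) v.mult_nonneg) _
  rw [hx.sum_proximity hTF hr, Finset.sum_add_distrib] at hle
  linarith [sum_log_ultrametricConst_le T]

theorem min_minProximity (x y : Fin 3 → K) (v : Place K) (c : ℝ) :
    min (c * minProximity x v) (minProximity y v) =
      v.mult * min (c * proximity v.abv x (sortPerm v.abv x 0))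
        (proximity v.abv y (sortPerm v.abv y 0)) := by
  rw [minProximity, minProximity, mul_left_comm, mul_min_of_nonneg _ _ v.mult_nonneg]

theorem IsSolution.sum_min_minProximity_le (hTF : T ⊆ F) (hr : ∀ v ∉ F, ∀ i, r v i = 1)
    (hx : IsSolution T r x) (hy : IsSolution T r y) (hxy : wedge x y ≠ 0)
    (hquad : ∀ v ∈ placesOver T, quadrant v x = quadrant v y) :
    ∑ v ∈ placesOver T, min (minProximity x v) (minProximity y v) ≤
      logHeight F x + logHeight F y - defect T F r + 0.35 * Module.finrank ℚ K := by
  have hgap : ∑ v ∈ placesOver T, v.mult * (min (proximity v.abv x (sortPerm v.abv x 0))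
      (proximity v.abv y (sortPerm v.abv y 0)) - (Real.log (supAbv v.abv x) +
        Real.log (supAbv v.abv y) - Real.log (v.abv (wedge x y)))) ≤ 0.35 * Module.finrank ℚ K := by
    refine sum_placesOver_le T (fun w => ?_) fun v hv => ?_
    · have hw := hquad (.inl w) (by simp [placesOver])
      simp only [quadrant, Sum.elim_inl, Prod.mk.injEq, decide_eq_decide] at hw
      have h := min_proximity_le_of_quadrant (fun z => (w.norm_embedding_eq z).symm) hx.ne_zero
        hy.ne_zero hx.sum_eq_zero hy.sum_eq_zero hxy hw.1 hw.2
      simp only [Place.abv, Sum.elim_inl]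
      linarith [Real.log_two_lt_d9]
    · have hσ := congrArg Prod.fst (hquad (.inr v) (by simpa [placesOver] using hv))
      dsimp only [quadrant] at hσ
      rw [← hσ, sub_nonpos]
      exact min_proximity_le_of_isNonarchimedean (Place.isNonarchimedean_abv_inr v) hx.ne_zero
        hy.ne_zero hx.sum_eq_zero hy.sum_eq_zero hxy _
  have hprod := hx.sum_sub_log_wedge_self_le hTF hr hy hxy
  simp only [mul_sub _ (min _ _), Finset.sum_sub_distrib] at hgap
  have hmin (v : Place K) := min_minProximity x y v 1
  simp only [one_mul] at hmin
  simp only [hmin]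
  linarith

theorem IsSolution.sum_min_mul_minProximity_le {u t : K} (hTF : T ⊆ F)
    (hr : ∀ v ∉ F, ∀ i, r v i = 1) (hu : IsSolution T r (unitTriple u))
    (ht : IsSolution T r (unitTriple t))
    (hsort : ∀ v ∈ placesOver T, sortPerm v.abv (unitTriple u) = sortPerm v.abv (unitTriple t))
    (N : ℕ) :
    ∑ v ∈ placesOver T,
        min ((2 * N + 1) * minProximity (unitTriple u) v) (minProximity (unitTriple t) v) ≤
      (3 * N + 2) * logHeight F (unitTriple u) + logHeight F (unitTriple t) - defect T F r +
        0.7 * (4 * N + 3) * Module.finrank ℚ K := by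
  obtain ⟨U, hU0, htU, hU⟩ := exists_padeApproximant N (u := u) (y := t)
    (by simpa [unitTriple] using hu.ne_zero 0) (by simpa [unitTriple] using hu.ne_zero 1)
    (by simpa [unitTriple] using ht.ne_zero 0)
  have hprod := hu.sum_sub_log_wedge_le hTF hr (p := 2 * N + 1) (q := N + 1) (by omega) ht hU0 htU
    fun v i => by
      simpa [ultrametricConst_eq_one _ (Place.isNonarchimedean_abv_inr v)] using
        hU (Place.abv (.inr v)) i
  have hconst := mul_le_mul_of_nonneg_left (sum_log_ultrametricConst_le T)
    (by positivity : (0 : ℝ) ≤ 4 * N + 3)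
  have hmin (v : Place K) (hv : v ∈ placesOver T) :
      min ((2 * N + 1) * minProximity (unitTriple u) v) (minProximity (unitTriple t) v) ≤
        v.mult * (((2 * N + 1 : ℕ) + (N + 1 : ℕ)) * Real.log (supAbv v.abv (unitTriple u)) +
          Real.log (supAbv v.abv (unitTriple t)) - Real.log (v.abv (wedge (unitTriple t) U))) +
        (4 * N + 3) * (v.mult * Real.log (ultrametricConst v.abv)) := by
    have hc : 0 < ultrametricConst v.abv := zero_lt_one.trans_le (one_le_ultrametricConst _)
    have h := min_proximity_le (pow_pos hc (4 * N + 2)) hu.ne_zero ht.ne_zero ht.sum_eq_zero hU0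
      htU (hU v.abv) (sortPerm v.abv (unitTriple u) 0)
    rw [Real.log_pow] at h
    have h' := mul_le_mul_of_nonneg_left h v.mult_nonneg
    rw [min_minProximity, ← hsort v hv]
    push_cast at h' ⊢
    linarith
  have hsum := Finset.sum_le_sum hmin
  rw [Finset.sum_add_distrib, ← Finset.mul_sum] at hsum
  push_cast at hsum hprod
  linarith

end NumberField

section Counting

variable {K : Type*} [Field K] [NumberField K] {T F : Finset (HeightOneSpectrum (𝓞 K))}
  {r : HeightOneSpectrum (𝓞 K) → Fin 3 → ℝ} {Z : Finset K}

theorem card_le_of_le_logHeight (hTF : T ⊆ F) (hr : ∀ v ∉ F, ∀ i, r v i = 1)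
    (hZ : ∀ u ∈ Z, IsSolution T r (unitTriple u))
    (hlarge : ∀ u ∈ Z, 1.33 * Module.finrank ℚ K ≤ logHeight F (unitTriple u)) :
    Z.card ≤ 2 * 2401 ^ sCard K T := by
  obtain rfl | ⟨u₀, hu₀⟩ := Z.eq_empty_or_nonempty
  · simp
  have : Nonempty (placesOver T) := (placesOver_nonempty T).to_subtype
  rw [← card_placesOver T, ← Fintype.card_coe (placesOver T),
    ← Nat.cast_le (α := ℝ)]
  push_cast
  refine card_le_of_sum_min_le (V := placesOver T) (d := Module.finrank ℚ K)
    (ρ := fun u v => minProximity (unitTriple u) v) (e := fun u v => quadrant v.1 (unitTriple u))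
    (by simp [Fintype.card_perm, Nat.factorial])
    ((hZ u₀ hu₀).defect_nonneg (F := F)) (by exact_mod_cast Module.finrank_pos)
    (fun u hu => (hZ u hu).defect_le hTF hr) hlarge
    (fun u hu v => minProximity_nonneg (hZ u hu).ne_zero v) (fun u hu => ?_)
    (fun u hu t ht hut he => ?_) (fun u hu t ht _ he N => ?_)
  · rw [Finset.sum_coe_sort (placesOver T) (minProximity (unitTriple u))]
    exact (hZ u hu).le_sum_minProximity hTF hr
  · rw [Finset.sum_coe_sort (placesOver T)
      fun v => min (minProximity (unitTriple u) v) (minProximity (unitTriple t) v)]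
    exact (hZ u hu).sum_min_minProximity_le hTF hr (hZ t ht)
      (by rwa [wedge_unitTriple, sub_ne_zero]) fun v hv => congrFun he ⟨v, hv⟩
  · rw [Finset.sum_coe_sort (placesOver T)
      fun v => min ((2 * N + 1) * minProximity (unitTriple u) v) (minProximity (unitTriple t) v)]
    exact (hZ u hu).sum_min_mul_minProximity_le hTF hr (hZ t ht)
      (fun v hv => congrArg Prod.fst (congrFun he ⟨v, hv⟩)) N

theorem log_14_4_gt : 2.66 < Real.log 14.4 := by
  have h : (2 : ℝ) ^ 96 ≤ 14.4 ^ 25 := by norm_num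
  have h' := Real.log_le_log (by positivity) h
  rw [Real.log_pow, Real.log_pow] at h'
  push_cast at h'
  linarith [Real.log_two_gt_d9]

theorem IsSolution.mul_finrank_le_of_cell_eq {x y : Fin 3 → K} (hTF : T ⊆ F)
    (hr : ∀ v ∉ F, ∀ i, r v i = 1) (hx : IsSolution T r x) (hy : IsSolution T r y)
    (hxy : wedge x y ≠ 0)
    (hcell : ∀ w : InfinitePlace K, cell w.embedding w.1 x = cell w.embedding w.1 y) :
    Real.log 14.4 * Module.finrank ℚ K ≤ logHeight F x + logHeight F y := by
  have hle : ∑ v ∈ placesOver T, v.mult * (Real.log (v.abv (wedge x y)) -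
      (Real.log (supAbv v.abv x) + Real.log (supAbv v.abv y))) ≤
      -Real.log 14.4 * Module.finrank ℚ K := by
    refine sum_placesOver_le T (fun w => ?_) fun v _ => ?_
    · have h := le_log_of_cell_eq (fun z => (w.norm_embedding_eq z).symm) hx.ne_zero hy.ne_zero
        hx.sum_eq_zero hy.sum_eq_zero hxy (hcell w)
      simp only [Place.abv, Sum.elim_inl]
      linarith
    · have h := (le_min (proximity_nonneg hx.ne_zero 0) (proximity_nonneg hy.ne_zero 0)).trans
        (min_proximity_le_of_isNonarchimedean (Place.isNonarchimedean_abv_inr v) hx.ne_zero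
          hy.ne_zero hx.sum_eq_zero hy.sum_eq_zero hxy 0)
      linarith
  have hprod := hx.sum_sub_log_wedge_self_le hTF hr hy hxy
  have hneg : ∑ v ∈ placesOver T, v.mult * (Real.log (v.abv (wedge x y)) -
      (Real.log (supAbv v.abv x) + Real.log (supAbv v.abv y))) =
      -∑ v ∈ placesOver T, v.mult * (Real.log (supAbv v.abv x) + Real.log (supAbv v.abv y) -
        Real.log (v.abv (wedge x y))) := by
    rw [← Finset.sum_neg_distrib]
    exact Finset.sum_congr rfl fun v _ => by ring
  linarith [hx.defect_nonneg (F := F)]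

theorem card_le_of_logHeight_lt (hTF : T ⊆ F) (hr : ∀ v ∉ F, ∀ i, r v i = 1)
    (hZ : ∀ u ∈ Z, IsSolution T r (unitTriple u))
    (hsmall : ∀ u ∈ Z, logHeight F (unitTriple u) < 1.33 * Module.finrank ℚ K) :
    Z.card ≤ 2310 ^ Fintype.card (InfinitePlace K) := by
  let cells : Finset (Equiv.Perm (Fin 3) × ℕ × ℕ) :=
    Finset.univ ×ˢ Finset.range 11 ×ˢ Finset.range 35
  have hcells : cells.card = 2310 := by
    rw [Finset.card_product, Finset.card_product, Finset.card_univ, Fintype.card_perm,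
      Fintype.card_fin, Finset.card_range, Finset.card_range]
    rfl
  have hcard : (Fintype.piFinset fun _ : InfinitePlace K => cells).card =
      2310 ^ Fintype.card (InfinitePlace K) := by
    rw [Fintype.card_piFinset, Finset.prod_const, hcells, Finset.card_univ]
  rw [← hcard]
  refine Finset.card_le_card_of_injOn
    (fun u w => cell w.embedding w.1 (unitTriple u)) (fun u hu => ?_) fun u hu t ht hut => ?_
  · exact Fintype.mem_piFinset.2 fun w =>
      cell_mem (fun z => (w.norm_embedding_eq z).symm) (hZ u hu).ne_zero (hZ u hu).sum_eq_zero
  · by_contra hne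
    have h := (hZ u hu).mul_finrank_le_of_cell_eq hTF hr (hZ t ht)
      (by rwa [wedge_unitTriple, sub_ne_zero]) (congrFun hut)
    have h' := mul_le_mul_of_nonneg_right log_14_4_gt.le (Module.finrank ℚ K).cast_nonneg
    linarith [hsmall u hu, hsmall t ht]

theorem card_isSolution_le (hTF : T ⊆ F) (hr : ∀ v ∉ F, ∀ i, r v i = 1)
    (hZ : ∀ u ∈ Z, IsSolution T r (unitTriple u)) : Z.card ≤ 3 * 7 ^ (4 * sCard K T) := by
  let large : K → Prop := fun u => 1.33 * Module.finrank ℚ K ≤ logHeight F (unitTriple u)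
  have hlarge := card_le_of_le_logHeight (Z := Z.filter large) hTF hr
    (fun u hu => hZ u (Finset.mem_filter.1 hu).1) fun u hu => (Finset.mem_filter.1 hu).2
  have hsmall := card_le_of_logHeight_lt (Z := Z.filter fun u => ¬large u) hTF hr
    (fun u hu => hZ u (Finset.mem_filter.1 hu).1) fun u hu => not_le.1 (Finset.mem_filter.1 hu).2
  have hcells : 2310 ^ Fintype.card (InfinitePlace K) ≤ 2401 ^ sCard K T :=
    (Nat.pow_le_pow_left (by norm_num) _).trans
      (Nat.pow_le_pow_right (by norm_num) (Nat.le_add_left _ _))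
  have hsplit := Finset.card_filter_add_card_filter_not (s := Z) large
  rw [pow_mul]
  norm_num only
  omega

theorem card_le_of_abv_eq (hZ : ∀ u ∈ Z, u ≠ 0 ∧ 1 - u ≠ 0)
    (hT : ∀ u ∈ Z, ∀ t ∈ Z, ∀ v ∉ T,
      adicAbv K v u = adicAbv K v t ∧ adicAbv K v (1 - u) = adicAbv K v (1 - t)) :
    Z.card ≤ 3 * 7 ^ (4 * sCard K T) := by
  obtain rfl | ⟨t, ht⟩ := Z.eq_empty_or_nonempty
  · simp
  have hfin (i : Fin 3) := finite_mulSupport_adicAbv (unitTriple_ne_zero (hZ t ht).1 (hZ t ht).2 i)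
  refine card_isSolution_le (F := T ∪ Finset.univ.biUnion fun i => (hfin i).toFinset)
    (r := fun v i => adicAbv K v (unitTriple t i)) Finset.subset_union_left (fun v hv i => ?_)
    fun u hu => ⟨unitTriple_ne_zero (hZ u hu).1 (hZ u hu).2, sum_unitTriple u, fun v hv i => ?_⟩
  · by_contra hvi
    exact hv (Finset.mem_union_right _ (Finset.mem_biUnion.2
      ⟨i, Finset.mem_univ i, (hfin i).mem_toFinset.2 hvi⟩))
  · obtain ⟨h0, h1⟩ := hT u hu t ht v hv
    fin_cases i <;> simp [unitTriple, h0, h1]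

end Counting

section Points

variable {K : Type*} [Field K] {A B C P Q : P1 K}

variable (P Q) in
/-- The form `x₁y₂ - x₂y₁` of two points of the projective line, on the chosen representatives. -/
noncomputable def pairing : K := P.rep 0 * Q.rep 1 - P.rep 1 * Q.rep 0

theorem pairing_eq_zero_iff : pairing P Q = 0 ↔ P = Q := by
  have hdet : pairing P Q = Matrix.det (Matrix.of ![P.rep, Q.rep]) := by
    simp [pairing, Matrix.det_fin_two]
  rw [← not_iff_not, ← ne_eq P, ← Projectivization.independent_pair_iff_ne,
    Projectivization.independent_iff, hdet, ← ne_eq, ← isUnit_iff_ne_zero,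
    ← Matrix.isUnit_iff_isUnit_det, ← Matrix.linearIndependent_rows_iff_isUnit]
  congr! 1
  ext i j
  fin_cases i <;> rfl

theorem pairing_ne_zero (h : P ≠ Q) : pairing P Q ≠ 0 := mt pairing_eq_zero_iff.1 h

variable (A B C P) in
/-- The cross-ratio of `P` with respect to `A`, `B` and `C`, as the coordinate of `P` taking the
values `0`, `1` and `∞` at these points. -/
noncomputable def crossRatio : K :=
  -(pairing B C / pairing A B) * (pairing A P / pairing C P)

theorem crossRatio_ne_zero (hAB : A ≠ B) (hBC : B ≠ C) (hAP : A ≠ P) (hCP : C ≠ P) :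
    crossRatio A B C P ≠ 0 :=
  mul_ne_zero (neg_ne_zero.2 (div_ne_zero (pairing_ne_zero hBC) (pairing_ne_zero hAB)))
    (div_ne_zero (pairing_ne_zero hAP) (pairing_ne_zero hCP))

theorem one_sub_crossRatio (hAB : A ≠ B) (hCP : C ≠ P) :
    1 - crossRatio A B C P = crossRatio B A C P := by
  have hAB' := pairing_ne_zero hAB
  have hBA' := pairing_ne_zero hAB.symm
  have hCP' := pairing_ne_zero hCP
  rw [crossRatio, crossRatio]
  field_simp
  unfold pairing
  ring

theorem crossRatio_inj (hAB : A ≠ B) (hAC : A ≠ C) (hBC : B ≠ C) (hCP : C ≠ P) (hCQ : C ≠ Q)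
    (h : crossRatio A B C P = crossRatio A B C Q) : P = Q := by
  have hconst := neg_ne_zero.2 (div_ne_zero (pairing_ne_zero hBC) (pairing_ne_zero hAB))
  have hratio := mul_left_cancel₀ hconst h
  rw [div_eq_div_iff (pairing_ne_zero hCP) (pairing_ne_zero hCQ)] at hratio
  have hplucker : pairing A C * pairing P Q =
      pairing A P * pairing C Q - pairing A Q * pairing C P := by
    unfold pairing
    ring
  rw [hratio, sub_self] at hplucker
  exact pairing_eq_zero_iff.1 ((mul_eq_zero.1 hplucker).resolve_left (pairing_ne_zero hAC))

variable [NumberField K]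

theorem valuation_eq_exp_ordAt (v : HeightOneSpectrum (𝓞 K)) {x : K} (hx : x ≠ 0) :
    v.valuation K x = WithZero.exp (-ordAt v x) := by
  rw [ordAt, dif_neg hx, neg_neg]
  exact (WithZero.coe_unzero ((v.valuation K).ne_zero_iff.2 hx)).symm

theorem ne_of_logDist_eq {v : HeightOneSpectrum (𝓞 K)} {n : ℤ} (h : logDist v A P = n) :
    A ≠ P := by
  rintro rfl
  simp [logDist] at h

theorem valuation_pairing {v : HeightOneSpectrum (𝓞 K)} {n : ℤ} (h : logDist v A P = n) :
    v.valuation K (pairing A P) =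
      WithZero.exp (-(n + minOrd v (A.rep 0) (A.rep 1) + minOrd v (P.rep 0) (P.rep 1))) := by
  have hAP := ne_of_logDist_eq h
  rw [valuation_eq_exp_ordAt v (pairing_ne_zero hAP)]
  rw [logDist, if_neg hAP, ← pairing, WithTop.coe_inj] at h
  rw [← h]
  congr 1
  ring

theorem adicAbv_crossRatio_eq {v : HeightOneSpectrum (𝓞 K)} {a c : ℤ} (hAP : logDist v A P = a)
    (hCP : logDist v C P = c) (hAQ : logDist v A Q = a) (hCQ : logDist v C Q = c) :
    adicAbv K v (crossRatio A B C P) = adicAbv K v (crossRatio A B C Q) := by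
  have hval : v.valuation K (crossRatio A B C P) = v.valuation K (crossRatio A B C Q) := by
    simp only [crossRatio, map_mul, map_div₀, valuation_pairing hAP, valuation_pairing hCP,
      valuation_pairing hAQ, valuation_pairing hCQ, ← WithZero.exp_sub, neg_sub_neg,
      add_sub_add_right_eq_sub]
  rw [adicAbv_def, adicAbv_def, hval]

theorem exists_prime_notMem (T : Finset (HeightOneSpectrum (𝓞 K))) : ∃ v, v ∉ T := by
  set N : ℕ := ∏ v ∈ T, Ideal.absNorm v.asIdeal
  have hmem (v) (hv : v ∈ T) : (N : 𝓞 K) ∈ v.asIdeal :=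
    v.asIdeal.mem_of_dvd (Nat.cast_dvd_cast (Finset.dvd_prod_of_mem _ hv))
      (Ideal.absNorm_mem v.asIdeal)
  have hN0 : N ≠ 0 := Finset.prod_ne_zero_iff.2 fun v _ => Ideal.absNorm_eq_zero_iff.not.2 v.ne_bot
  have hunit : ¬IsUnit ((N + 1 : ℕ) : 𝓞 K) := by
    intro h
    have hint := isUnit_of_map_unit (algebraMap ℤ (𝓞 K)) ((N + 1 : ℕ) : ℤ) (by simpa using h)
    rw [Int.isUnit_iff] at hint
    omega
  obtain ⟨M, hM, hNM⟩ := exists_max_ideal_of_mem_nonunits hunit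
  refine ⟨⟨M, hM.isPrime, ?_⟩, fun hv => hM.ne_top ?_⟩
  · rintro rfl
    exact absurd (Ideal.mem_bot.1 hNM) (Nat.cast_ne_zero.2 N.succ_ne_zero)
  · rw [Ideal.eq_top_iff_one]
    simpa using M.sub_mem hNM (hmem _ hv)

theorem card_points_le {T : Finset (HeightOneSpectrum (𝓞 K))} {a b c : HeightOneSpectrum (𝓞 K) → ℤ}
    (hAB : A ≠ B) (hAC : A ≠ C) (hBC : B ≠ C) {X : Finset (P1 K)}
    (hX : ∀ P ∈ X, ∀ v ∉ T, logDist v A P = a v ∧ logDist v B P = b v ∧ logDist v C P = c v) :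
    X.card ≤ 3 * 7 ^ (4 * sCard K T) := by
  obtain ⟨v₀, hv₀⟩ := exists_prime_notMem T
  have hA (P) (hP : P ∈ X) : A ≠ P := ne_of_logDist_eq (hX P hP v₀ hv₀).1
  have hB (P) (hP : P ∈ X) : B ≠ P := ne_of_logDist_eq (hX P hP v₀ hv₀).2.1
  have hC (P) (hP : P ∈ X) : C ≠ P := ne_of_logDist_eq (hX P hP v₀ hv₀).2.2
  rw [← Finset.card_image_of_injOn (f := crossRatio A B C) fun P hP Q hQ =>
    crossRatio_inj hAB hAC hBC (hC P hP) (hC Q hQ)]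
  refine card_le_of_abv_eq (Finset.forall_mem_image.2 fun P hP => ?_)
    (Finset.forall_mem_image.2 fun P hP => Finset.forall_mem_image.2 fun Q hQ v hv => ?_)
  · rw [one_sub_crossRatio hAB (hC P hP)]
    exact ⟨crossRatio_ne_zero hAB hBC (hA P hP) (hC P hP),
      crossRatio_ne_zero hAB.symm hAC (hB P hP) (hC P hP)⟩
  · obtain ⟨hAP, hBP, hCP⟩ := hX P hP v hv
    obtain ⟨hAQ, hBQ, hCQ⟩ := hX Q hQ v hv
    rw [one_sub_crossRatio hAB (hC P hP), one_sub_crossRatio hAB (hC Q hQ)]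
    exact ⟨adicAbv_crossRatio_eq hAP hCP hAQ hCQ, adicAbv_crossRatio_eq hBP hCP hBQ hCQ⟩

end Points

theorem finite_and_ncard_le_of_forall_finset {α : Type*} {s : Set α} {k : ℕ}
    (h : ∀ t : Finset α, ↑t ⊆ s → t.card ≤ k) : s.Finite ∧ s.ncard ≤ k := by
  have hfin : s.Finite := by
    by_contra hinf
    obtain ⟨t, hts, ht⟩ := Set.Infinite.exists_subset_card_eq hinf (k + 1)
    exact absurd (h t hts) (by omega)
  exact ⟨hfin, Set.ncard_eq_toFinset_card s hfin ▸ h _ hfin.coe_toFinset.subset⟩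

end UnitEquation

theorem three_point_lemma_A_general
    {K : Type*} [Field K] [NumberField K]
    (T : Finset (HeightOneSpectrum (𝓞 K))) (a b c : HeightOneSpectrum (𝓞 K) → ℤ)
    (A B C : P1 K) (hAB : A ≠ B) (hAC : A ≠ C) (hBC : B ≠ C) :
    {P : P1 K | ∀ v ∉ T,
        logDist v A P = a v ∧ logDist v B P = b v ∧ logDist v C P = c v}.Finite ∧
      {P : P1 K | ∀ v ∉ T,
        logDist v A P = a v ∧ logDist v B P = b v ∧ logDist v C P = c v}.ncard ≤
          3 * 7 ^ (4 * sCard K T) :=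
  UnitEquation.finite_and_ncard_le_of_forall_finset fun _ hX =>
    UnitEquation.card_points_le hAB hAC hBC fun _ hP => hX hP

/-- **Three-Point Lemma A.** Given three distinct points `A, B, C ∈ ℙ¹(K)`, the set of points
`P ∈ ℙ¹(K)` with `δ_𝔭(A,P) = δ_𝔭(B,P) = δ_𝔭(C,P) = 0` for all `𝔭 ∉ S` is finite of
cardinality at most `3·7^{4|S|}`. -/
theorem three_point_lemma_A
    {K : Type*} [Field K] [NumberField K]
    (T : Finset (HeightOneSpectrum (𝓞 K)))
    (A B C : P1 K) (hAB : A ≠ B) (hAC : A ≠ C) (hBC : B ≠ C) :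
    {P : P1 K | ∀ v ∉ T,
        logDist v A P = 0 ∧ logDist v B P = 0 ∧ logDist v C P = 0}.Finite ∧
      {P : P1 K | ∀ v ∉ T,
        logDist v A P = 0 ∧ logDist v B P = 0 ∧ logDist v C P = 0}.ncard ≤
          3 * 7 ^ (4 * sCard K T) := by
  exact_mod_cast three_point_lemma_A_general T 0 0 0 A B C hAB hAC hBC
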